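/- arXiv:1511.08929 — 3 statements merged into one kernel-verified Lean document; each statement's English description precedes it below -/
import Mathlib

section
/- Let T ∈ B(X) and let (t_{nj})_{n,j≥0} be nonnegative reals with Σ_{j≥0} t_{nj} = 1 for every n, such that T_n = Σ_{j≥0} t_{nj} T^j converges in operator norm for each n. Assume t_{n0} ≠ 1 and σ_n := Σ_{j≥1} j·t_{nj} < ∞ for every n, and σ_n → ∞ as n → ∞. For each n, k set s_{nk} = (Σ_{j≥k+1} t_{nj})/σ_n, and for λ ∈ ℂ with |λ| = 1 let T_{nλ} = Σ_{j≥0} t_{nj} λ^j T^j and T_{nλ}^{(−1)} = Σ_{k≥0} s_{nk} λ^k T^k. Suppose (w_n) is an increasing sequence of positive reals with ‖T_{nλ}‖ + ‖T_{nλ}^{(−1)}‖ ≤ w_n for all n and all |λ| = 1, and that σ(T) ∩ 𝕋 has one-dimensional Hausdorff measure zero. Then for every strictly increasing sequence (m_n) of positive integers, (‖T^n‖ · s_{m_n,n}) / w_{m_n} → 0 as n → ∞. -/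
open Filter Topology MeasureTheory

/-!
Write `Z(z) = ∑ t_j z^j x^j` and `Y(z) = ∑ s_k z^k x^k` with `s_k = σ⁻¹ ∑_{j > k} t_j`, and
let `‖Z‖ + ‖Y‖ ≤ w` on the unit circle. The Fourier coefficients of `Y` satisfy
`‖s_k x^k‖ ≤ ⨍ ‖Y‖`, so it is enough that `‖Y‖ / w`, which is bounded by `1`, tends to zero in mean.
Summation by parts gives `(z x - 1) Y(z) = σ⁻¹ (Z(z) - 1)`, hence `‖Y(z)‖ / w = O(|σ|⁻¹)` whenever
`z⁻¹` lies outside the spectrum of `x`. This is the case for almost every `z`, because the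
peripheral spectrum has length zero, and dominated convergence applies.
-/

section CircleMap

open Set Real

variable {R : ℝ}

lemma norm_circleMap_sub_circleMap (c : ℂ) (R θ φ : ℝ) :
    ‖circleMap c R θ - circleMap c R φ‖ = 2 * |R| * |sin ((θ - φ) / 2)| := by
  have hfactor : circleMap c R θ - circleMap c R φ =
      circleMap 0 R φ * (Complex.exp (Complex.I * ↑(θ - φ)) - 1) := by
    simp only [circleMap, zero_add, mul_sub, mul_assoc, ← Complex.exp_add]
    push_cast
    ring_nf
  rw [hfactor, norm_mul, norm_circleMap_zero, Complex.norm_exp_I_mul_ofReal_sub_one, norm_mul,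
    norm_eq_abs, norm_eq_abs, abs_two]
  ring

lemma antilipschitzWith_circleMap_Icc (c : ℂ) (hR : R ≠ 0) (α : ℝ) :
    AntilipschitzWith (π / (2 * |R|)).toNNReal fun θ : Icc α (α + π) => circleMap c R θ := by
  refine AntilipschitzWith.of_le_mul_dist fun θ φ => ?_
  have hsin : 2 / π * |((θ : ℝ) - φ) / 2| ≤ |sin (((θ : ℝ) - φ) / 2)| := by
    refine mul_abs_le_abs_sin ?_
    rw [abs_div, abs_two]
    gcongr
    exact abs_sub_le_iff.2 ⟨by linarith [θ.2.2, φ.2.1], by linarith [φ.2.2, θ.2.1]⟩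
  rw [coe_toNNReal _ (by positivity), Subtype.dist_eq, Real.dist_eq, dist_eq_norm,
    norm_circleMap_sub_circleMap]
  calc |(θ : ℝ) - φ| = π / (2 * |R|) * (2 * |R| * (2 / π * |((θ : ℝ) - φ) / 2|)) := by
        rw [abs_div, abs_two]
        field_simp
    _ ≤ π / (2 * |R|) * (2 * |R| * |sin (((θ : ℝ) - φ) / 2)|) := by gcongr

lemma ae_circleMap_notMem (c : ℂ) (hR : R ≠ 0) {S : Set ℂ} (hS : μH[1] S = 0) :
    ∀ᵐ θ, circleMap c R θ ∉ S := by
  have harc (α : ℝ) : volume (Icc α (α + π) ∩ circleMap c R ⁻¹' S) = 0 := by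
    rw [← Subtype.image_preimage_coe, ← hausdorffMeasure_real,
      isometry_subtype_coe.hausdorffMeasure_image (.inl zero_le_one)]
    refine le_antisymm ?_ zero_le
    have hle := (antilipschitzWith_circleMap_Icc c hR α).hausdorffMeasure_preimage_le zero_le_one S
    rwa [hS, mul_zero] at hle
  have hcover : circleMap c R ⁻¹' S ⊆ ⋃ n : ℤ, Icc (n • π) (n • π + π) ∩ circleMap c R ⁻¹' S := by
    rw [← iUnion_inter]
    refine subset_inter (fun θ _ => ?_) subset_rfl
    have := iUnion_Icc_zsmul pi_pos
    simp only [add_smul, one_smul] at this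
    exact this ▸ mem_univ θ
  exact measure_eq_zero_iff_ae_notMem.1
    (measure_mono_null hcover (measure_iUnion_null fun n : ℤ => harc (n • π)))

end CircleMap

section CircleAverage

open Metric Real

variable {E : Type*} [NormedAddCommGroup E] {c : ℂ} {R : ℝ}

lemma tendsto_circleAverage_of_dominated_convergence [NormedSpace ℝ E] {ι : Type*} {l : Filter ι}
    [l.IsCountablyGenerated] {F : ι → ℂ → E} {f : ℂ → E} (bound : ℂ → ℝ)
    (hF_meas : ∀ᶠ i in l, AEStronglyMeasurable fun θ => F i (circleMap c R θ))
    (h_bound : ∀ᶠ i in l, ∀ᵐ θ, ‖F i (circleMap c R θ)‖ ≤ bound (circleMap c R θ))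
    (bound_integrable : CircleIntegrable bound c R)
    (h_lim : ∀ᵐ θ, Tendsto (fun i => F i (circleMap c R θ)) l (𝓝 (f (circleMap c R θ)))) :
    Tendsto (fun i => circleAverage (F i) c R) l (𝓝 (circleAverage f c R)) := by
  refine (intervalIntegral.tendsto_integral_filter_of_dominated_convergence _
    (hF_meas.mono fun i hi => hi.restrict) ?_ bound_integrable ?_).const_smul _
  · exact h_bound.mono fun i hi => hi.mono fun θ hθ _ => hθ
  · exact h_lim.mono fun θ hθ _ => hθ

lemma norm_circleAverage_le_of_norm_le [NormedSpace ℝ E] {f : ℂ → E} {g : ℂ → ℝ}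
    (hg : CircleIntegrable g c R) (hfg : ∀ z ∈ sphere c |R|, ‖f z‖ ≤ g z) :
    ‖circleAverage f c R‖ ≤ circleAverage g c R := by
  rw [circleAverage, circleAverage, norm_smul, norm_of_nonneg (by positivity), smul_eq_mul]
  gcongr
  exact intervalIntegral.norm_integral_le_of_norm_le two_pi_pos.le
    (ae_of_all _ fun θ _ => hfg _ (circleMap_mem_sphere' c R θ)) hg

lemma circleAverage_sub_center_zpow (c : ℂ) (hR : R ≠ 0) (n : ℤ) :
    circleAverage (fun z => (z - c) ^ n) c R = if n = 0 then 1 else 0 := by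
  split_ifs with hn
  · simp only [hn, zpow_zero, circleAverage_const]
  · have hshift (θ : ℝ) : (circleMap c R θ - c)⁻¹ • (circleMap c R θ - c) ^ n =
        (circleMap c R θ - c) ^ (n - 1) := by
      rw [smul_eq_mul, zpow_sub_one₀ (sub_ne_zero.2 (circleMap_ne_center hR)), mul_comm]
    calc circleAverage (fun z => (z - c) ^ n) c R
        = (2 * π * Complex.I)⁻¹ • ∮ z in C(c, R), (z - c) ^ (n - 1) := by
          simp only [circleAverage_eq_circleIntegral hR, circleIntegral, hshift]
      _ = 0 := by
          rw [circleIntegral.integral_sub_zpow_of_ne (by lia), smul_zero]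

lemma stronglyMeasurable_comp_circleMap_of_hasSum [NormedSpace ℂ E] {a : ℕ → E} {f : ℂ → E}
    (hf : ∀ z ∈ sphere c |R|, HasSum (fun k => (z - c) ^ k • a k) (f z)) :
    StronglyMeasurable fun θ => f (circleMap c R θ) := by
  refine stronglyMeasurable_of_tendsto (u := atTop)
    (f := fun N θ => ∑ k ∈ Finset.range N, (circleMap c R θ - c) ^ k • a k) (fun N => ?_) ?_
  · exact Continuous.stronglyMeasurable (by fun_prop)
  · exact tendsto_pi_nhds.2 fun θ => (hf _ (circleMap_mem_sphere' c R θ)).tendsto_sum_nat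

lemma circleIntegrable_of_hasSum_of_norm_le [NormedSpace ℂ E] {a : ℕ → E} {f : ℂ → E} {C : ℝ}
    (hf : ∀ z ∈ sphere c |R|, HasSum (fun k => (z - c) ^ k • a k) (f z))
    (hC : ∀ z ∈ sphere c |R|, ‖f z‖ ≤ C) : CircleIntegrable f c R :=
  (intervalIntegrable_const (c := C)).mono_fun'
    (stronglyMeasurable_comp_circleMap_of_hasSum hf).aestronglyMeasurable
    (ae_of_all _ fun θ => hC _ (circleMap_mem_sphere' c R θ))

lemma circleAverage_zpow_neg_mul_of_hasSum {a : ℕ → ℂ} {f : ℂ → ℂ} (hR : R ≠ 0)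
    (hf : ∀ z ∈ sphere c |R|, HasSum (fun k => (z - c) ^ k * a k) (f z)) (k : ℕ) :
    circleAverage (fun z => (z - c) ^ (-k : ℤ) * f z) c R = a k := by
  set g : ℕ → ℂ → ℂ := fun j z => a j • (z - c) ^ ((j : ℤ) - k)
  have hterm (θ : ℝ) : HasSum (fun j => g j (circleMap c R θ))
      ((circleMap c R θ - c) ^ (-k : ℤ) * f (circleMap c R θ)) := by
    refine ((hf _ (circleMap_mem_sphere' c R θ)).mul_left _).congr_fun fun j => ?_
    rw [← mul_assoc, ← zpow_natCast, ← zpow_add₀ (sub_ne_zero.2 (circleMap_ne_center hR)),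
      neg_add_eq_sub, mul_comm]
    rfl
  have hnorm (j : ℕ) (θ : ℝ) : ‖g j (circleMap c R θ)‖ = ‖a j‖ * |R| ^ ((j : ℤ) - k) := by
    simp [g]
  have hsummable : Summable fun j : ℕ => ‖a j‖ * |R| ^ ((j : ℤ) - k) := by
    simpa only [hnorm] using (hterm 0).summable.norm
  have hcont (j : ℕ) : Continuous fun θ => g j (circleMap c R θ) := by
    refine (Continuous.zpow₀ (by fun_prop) _ fun θ => .inl ?_).const_smul (a j)
    exact sub_ne_zero.2 (circleMap_ne_center hR)
  have hsum : HasSum (fun j => circleAverage (g j) c R)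
      (circleAverage (fun z => (z - c) ^ (-k : ℤ) * f z) c R) :=
    (intervalIntegral.hasSum_integral_of_dominated_convergence
      (fun (j : ℕ) _ => ‖a j‖ * |R| ^ ((j : ℤ) - k))
      (fun j => (hcont j).aestronglyMeasurable)
      (fun j => ae_of_all _ fun θ _ => (hnorm j θ).le)
      (ae_of_all _ fun _ _ => hsummable) intervalIntegrable_const
      (ae_of_all _ fun θ _ => hterm θ)).const_smul _
  refine hsum.unique ?_
  have havg (j : ℕ) : circleAverage (g j) c R = if j = k then a k else 0 := by
    calc circleAverage (g j) c R
        = a j • circleAverage (fun z => (z - c) ^ ((j : ℤ) - k)) c R := circleAverage_fun_smul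
      _ = if j = k then a k else 0 := by
          rw [circleAverage_sub_center_zpow c hR]
          simp only [sub_eq_zero, Nat.cast_inj]
          split_ifs with hj <;> simp [hj]
  simpa only [havg] using hasSum_ite_eq k (a k)

lemma pow_mul_norm_coeff_le_circleAverage_norm [NormedSpace ℂ E] {a : ℕ → E} {f : ℂ → E}
    (hR : R ≠ 0) (hf : ∀ z ∈ sphere c |R|, HasSum (fun k => (z - c) ^ k • a k) (f z))
    (hf_int : CircleIntegrable f c R) (k : ℕ) :
    |R| ^ k * ‖a k‖ ≤ circleAverage (fun z => ‖f z‖) c R := by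
  obtain ⟨φ, hφ_norm, hφ⟩ := exists_dual_vector'' ℂ (a k)
  have hφf : ∀ z ∈ sphere c |R|, HasSum (fun k => (z - c) ^ k * φ (a k)) (φ (f z)) :=
    fun z hz => by simpa only [map_smul, smul_eq_mul] using (hf z hz).mapL φ
  have hbound : ∀ z ∈ sphere c |R|,
      ‖(z - c) ^ (-k : ℤ) * φ (f z)‖ ≤ (|R| ^ k)⁻¹ • ‖f z‖ := fun z hz => by
    rw [norm_mul, norm_zpow, mem_sphere_iff_norm.1 hz, zpow_neg, zpow_natCast, smul_eq_mul]
    gcongr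
    exact φ.le_of_opNorm_le_of_le hφ_norm le_rfl |>.trans_eq (one_mul _)
  rw [← le_inv_mul_iff₀ (by positivity)]
  calc ‖a k‖ = ‖circleAverage (fun z => (z - c) ^ (-k : ℤ) * φ (f z)) c R‖ := by
        rw [circleAverage_zpow_neg_mul_of_hasSum hR hφf, hφ, RCLike.norm_ofReal, abs_norm]
    _ ≤ circleAverage (fun z => (|R| ^ k)⁻¹ • ‖f z‖) c R :=
        norm_circleAverage_le_of_norm_le (IntervalIntegrable.norm hf_int |>.const_mul _) hbound
    _ = (|R| ^ k)⁻¹ * circleAverage (fun z => ‖f z‖) c R := circleAverage_fun_smul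

lemma tendsto_pow_mul_norm_coeff_div [NormedSpace ℂ E] {ι : Type*} {l : Filter ι}
    [l.IsCountablyGenerated] {a : ι → ℕ → E} {f : ι → ℂ → E} {w : ι → ℝ} (hR : R ≠ 0)
    (hf : ∀ i, ∀ z ∈ sphere c |R|, HasSum (fun k => (z - c) ^ k • a i k) (f i z))
    (hfw : ∀ i, ∀ z ∈ sphere c |R|, ‖f i z‖ ≤ w i)
    (h_lim : ∀ᵐ θ, Tendsto (fun i => ‖f i (circleMap c R θ)‖ / w i) l (𝓝 0)) :
    Tendsto (fun (i, k) => |R| ^ k * ‖a i k‖ / w i) (l ×ˢ ⊤) (𝓝 0) := by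
  have hw (i : ι) : 0 ≤ w i :=
    (norm_nonneg _).trans (hfw i _ (circleMap_mem_sphere' c R 0))
  have h_avg : Tendsto (fun i => circleAverage (fun z => ‖f i z‖ / w i) c R) l (𝓝 0) := by
    rw [← circleAverage_const (0 : ℝ) c R]
    refine tendsto_circleAverage_of_dominated_convergence (fun _ => 1) (.of_forall fun i => ?_)
      (.of_forall fun i => ae_of_all _ fun θ => ?_) (circleIntegrable_const 1 c R) h_lim
    · simp only [div_eq_mul_inv]
      exact ((stronglyMeasurable_comp_circleMap_of_hasSum (hf i)).norm.mul_const
        _).aestronglyMeasurable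
    · rw [norm_div, norm_norm, norm_of_nonneg (hw i)]
      exact div_le_one_of_le₀ (hfw i _ (circleMap_mem_sphere' c R θ)) (hw i)
  refine squeeze_zero (fun p => div_nonneg (by positivity) (hw p.1)) (fun ⟨i, k⟩ => ?_)
    (h_avg.comp tendsto_fst)
  have hcoeff := pow_mul_norm_coeff_le_circleAverage_norm hR (hf i)
    (circleIntegrable_of_hasSum_of_norm_le (hf i) (hfw i)) k
  calc |R| ^ k * ‖a i k‖ / w i ≤ circleAverage (fun z => ‖f i z‖) c R / w i :=
        div_le_div_of_nonneg_right hcoeff (hw i)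
    _ = circleAverage (fun z => ‖f i z‖ / w i) c R := by
        simp only [div_eq_inv_mul, ← smul_eq_mul, circleAverage_fun_smul]

end CircleAverage

section BackwardIterate

lemma tsum_ite_lt_eq_sub_sum_range {G : Type*} [AddCommGroup G] [TopologicalSpace G]
    [IsTopologicalAddGroup G] [T2Space G] {t : ℕ → G} {S : G} (ht : HasSum t S) (k : ℕ) :
    (∑' j, if k < j then t j else 0) = S - ∑ j ∈ Finset.range (k + 1), t j := by
  have hhead : HasSum (fun j => if j < k + 1 then t j else 0)
      (∑ j ∈ Finset.range (k + 1), t j) := by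
    rw [← Finset.sum_congr rfl fun j hj => if_pos (Finset.mem_range.1 hj)]
    exact hasSum_sum_of_ne_finset_zero fun j hj => if_neg (Finset.mem_range.not.1 hj)
  refine ((ht.sub hhead).congr_fun fun j => ?_).tsum_eq
  grind

variable {𝕜 A : Type*} [Field 𝕜] [TopologicalSpace 𝕜] [IsTopologicalRing 𝕜] [T2Space 𝕜]
  [Ring A] [TopologicalSpace A] [IsTopologicalRing A] [T2Space A] [Algebra 𝕜 A]
  [ContinuousConstSMul 𝕜 A]

lemma sub_one_mul_eq_inv_smul_sub_one_of_hasSum {t s : ℕ → 𝕜} {σ : 𝕜} {b Z Y : A}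
    (ht : HasSum t 1) (hs : ∀ k, s k = (∑' j, if k < j then t j else 0) / σ)
    (hZ : HasSum (fun j => t j • b ^ j) Z) (hY : HasSum (fun k => s k • b ^ k) Y) :
    (b - 1) * Y = σ⁻¹ • (Z - 1) := by
  have hs_zero : s 0 = σ⁻¹ * (1 - t 0) := by
    rw [hs, tsum_ite_lt_eq_sub_sum_range ht, zero_add, Finset.sum_range_one, div_eq_inv_mul]
  have hs_sub (k : ℕ) : s k - s (k + 1) = σ⁻¹ * t (k + 1) := by
    rw [hs, hs, tsum_ite_lt_eq_sub_sum_range ht, tsum_ite_lt_eq_sub_sum_range ht,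
      Finset.sum_range_succ _ (k + 1)]
    ring
  have hY_shift : HasSum (fun k => (s k - s (k + 1)) • b ^ (k + 1)) (b * Y - (Y - s 0 • 1)) := by
    have hY_tail := (hasSum_nat_add_iff' 1).2 hY
    simp only [Finset.sum_range_one, pow_zero] at hY_tail
    refine ((hY.mul_left b).sub hY_tail).congr_fun fun k => ?_
    rw [mul_smul_comm, ← pow_succ', sub_smul]
  have hZ_tail : HasSum (fun k => (σ⁻¹ * t (k + 1)) • b ^ (k + 1)) (σ⁻¹ • (Z - t 0 • 1)) := by
    simpa only [Finset.sum_range_one, pow_zero, smul_smul] using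
      ((hasSum_nat_add_iff' 1).2 hZ).const_smul σ⁻¹
  simp only [hs_sub] at hY_shift
  calc (b - 1) * Y = b * Y - (Y - s 0 • 1) - s 0 • 1 := by noncomm_ring
    _ = σ⁻¹ • (Z - t 0 • 1) - (σ⁻¹ * (1 - t 0)) • 1 := by
        rw [hY_shift.unique hZ_tail, hs_zero]
    _ = σ⁻¹ • (Z - 1) := by module

end BackwardIterate

section Nevanlinna

lemma isUnit_smul_sub_one_of_inv_notMem_spectrum {𝕜 B : Type*} [Field 𝕜] [Ring B] [Algebra 𝕜 B]
    {z : 𝕜} {x : B} (hz : z ≠ 0) (hx : z⁻¹ ∉ spectrum 𝕜 x) : IsUnit (z • x - 1) := by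
  have h_one : (1 : 𝕜) ∉ spectrum 𝕜 (Units.mk0 z hz • x) := by
    rw [← mul_inv_cancel₀ hz]
    exact mt spectrum.smul_mem_smul_iff.1 hx
  rw [spectrum.notMem_iff, map_one] at h_one
  exact IsUnit.sub_iff.1 h_one

variable {ι A : Type*} [NormedRing A] {l : Filter ι} {w : ι → ℝ} {δ : ℝ}

lemma tendsto_norm_div_of_isUnit_sub_one {𝕜 : Type*} [NormedField 𝕜] [NormedAlgebra 𝕜 A]
    {t s : ι → ℕ → 𝕜} {σ : ι → 𝕜} {b : A} {Z Y : ι → A} (hb : IsUnit (b - 1))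
    (ht : ∀ i, HasSum (t i) 1) (hσ : Tendsto σ l (Bornology.cobounded 𝕜))
    (hs : ∀ i k, s i k = (∑' j, if k < j then t i j else 0) / σ i)
    (hZ : ∀ i, HasSum (fun j => t i j • b ^ j) (Z i))
    (hY : ∀ i, HasSum (fun k => s i k • b ^ k) (Y i))
    (hδ : 0 < δ) (hw : ∀ i, δ ≤ w i) (hZw : ∀ i, ‖Z i‖ ≤ w i) :
    Tendsto (fun i => ‖Y i‖ / w i) l (𝓝 0) := by
  obtain ⟨u, hu⟩ := hb
  have hw_pos (i : ι) : 0 < w i := hδ.trans_le (hw i)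
  have hY_eq (i : ι) : Y i = ↑u⁻¹ * ((σ i)⁻¹ • (Z i - 1)) := by
    rw [Units.eq_inv_mul_iff_mul_eq, hu,
      sub_one_mul_eq_inv_smul_sub_one_of_hasSum (ht i) (hs i) (hZ i) (hY i)]
  have hZ_sub (i : ι) : ‖Z i - 1‖ ≤ (1 + ‖(1 : A)‖ / δ) * w i :=
    calc ‖Z i - 1‖ ≤ w i + ‖(1 : A)‖ / δ * δ := by
          rw [div_mul_cancel₀ _ hδ.ne']
          exact (norm_sub_le _ _).trans (by gcongr; exact hZw i)
      _ ≤ w i + ‖(1 : A)‖ / δ * w i := by gcongr; exact hw i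
      _ = (1 + ‖(1 : A)‖ / δ) * w i := by ring
  have hY_le (i : ι) :
      ‖Y i‖ / w i ≤ ‖(↑u⁻¹ : A)‖ * (1 + ‖(1 : A)‖ / δ) * ‖σ i‖⁻¹ := by
    rw [div_le_iff₀ (hw_pos i)]
    calc ‖Y i‖ ≤ ‖(↑u⁻¹ : A)‖ * (‖σ i‖⁻¹ * ‖Z i - 1‖) := by
          rw [hY_eq, ← norm_inv, ← norm_smul]
          exact norm_mul_le _ _
      _ ≤ ‖(↑u⁻¹ : A)‖ * (‖σ i‖⁻¹ * ((1 + ‖(1 : A)‖ / δ) * w i)) := by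
          gcongr
          exact hZ_sub i
      _ = ‖(↑u⁻¹ : A)‖ * (1 + ‖(1 : A)‖ / δ) * ‖σ i‖⁻¹ * w i := by ring
  refine squeeze_zero (fun i => div_nonneg (norm_nonneg _) (hw_pos i).le) hY_le ?_
  simpa only [Function.comp_apply, norm_inv, norm_zero, mul_zero] using
    (tendsto_inv₀_cobounded.comp hσ).norm.const_mul _

variable [NormedAlgebra ℂ A]

lemma ae_inv_circleMap_notMem_spectrum {x : A}
    (hspec : μH[1] (spectrum ℂ x ∩ Metric.sphere 0 1) = 0) :
    ∀ᵐ θ, (circleMap 0 1 θ)⁻¹ ∉ spectrum ℂ x := by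
  have h_neg : ∀ᵐ θ, circleMap 0 1 (-θ) ∉ spectrum ℂ x ∩ Metric.sphere 0 1 :=
    (Measure.measurePreserving_neg (volume : Measure ℝ)).quasiMeasurePreserving.ae
      (ae_circleMap_notMem 0 one_ne_zero hspec)
  filter_upwards [h_neg] with θ hθ hmem
  rw [circleMap_zero_inv, inv_one] at hmem
  exact hθ ⟨hmem, circleMap_mem_sphere 0 zero_le_one _⟩

/-- The filter `⊤` on the exponents makes the convergence uniform in `k`. -/
theorem stmt12_general [l.IsCountablyGenerated] {t s : ι → ℕ → ℂ} {σ : ι → ℂ} (x : A)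
    (ht : ∀ i, HasSum (t i) 1) (hσ : Tendsto σ l (Bornology.cobounded ℂ))
    (hs : ∀ i k, s i k = (∑' j, if k < j then t i j else 0) / σ i)
    {Z Y : ι → ℂ → A}
    (hZ : ∀ i z, ‖z‖ = 1 → HasSum (fun j => (t i j * z ^ j) • x ^ j) (Z i z))
    (hY : ∀ i z, ‖z‖ = 1 → HasSum (fun k => (s i k * z ^ k) • x ^ k) (Y i z))
    (hδ : 0 < δ) (hw : ∀ i, δ ≤ w i)
    (hbound : ∀ i z, ‖z‖ = 1 → ‖Z i z‖ + ‖Y i z‖ ≤ w i)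
    (hspec : μH[1] (spectrum ℂ x ∩ Metric.sphere 0 1) = 0) :
    Tendsto (fun (i, k) => ‖x ^ k‖ * ‖s i k‖ / w i) (l ×ˢ ⊤) (𝓝 0) := by
  have hZ_le (i : ι) (z : ℂ) (hz : ‖z‖ = 1) : ‖Z i z‖ ≤ w i :=
    (le_add_of_nonneg_right (norm_nonneg _)).trans (hbound i z hz)
  have hY_le (i : ι) (z : ℂ) (hz : ‖z‖ = 1) : ‖Y i z‖ ≤ w i :=
    (le_add_of_nonneg_left (norm_nonneg _)).trans (hbound i z hz)
  have h_lim : ∀ᵐ θ, Tendsto (fun i => ‖Y i (circleMap 0 1 θ)‖ / w i) l (𝓝 0) := by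
    filter_upwards [ae_inv_circleMap_notMem_spectrum hspec] with θ hθ
    have hz : ‖circleMap 0 1 θ‖ = 1 := by rw [norm_circleMap_zero, abs_one]
    refine tendsto_norm_div_of_isUnit_sub_one
      (isUnit_smul_sub_one_of_inv_notMem_spectrum (circleMap_ne_center one_ne_zero) hθ)
      ht hσ hs (fun i => ?_) (fun i => ?_) hδ hw fun i => hZ_le i _ hz
    · simpa only [smul_pow, smul_smul] using hZ i _ hz
    · simpa only [smul_pow, smul_smul] using hY i _ hz
  have hcoeff := tendsto_pow_mul_norm_coeff_div (c := 0) (a := fun i k => s i k • x ^ k)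
    one_ne_zero (fun i z hz => ?_) (fun i z hz => hY_le i z (by simpa using hz)) h_lim
  · simpa only [abs_one, one_pow, one_mul, norm_smul, mul_comm ‖s _ _‖] using hcoeff
  · simpa only [sub_zero, smul_smul, mul_comm] using hY i z (by simpa using hz)

end Nevanlinna

/-- Generalized Nevanlinna theorem: if {T_n} ⊆ κ(T) has coefficients t_{nj} with
t_{n0} ≠ 1, σ_n = Σ_j j t_{nj} < ∞, σ_n → ∞, and the rotated means T_{nλ} together
with their backward iterates T_{nλ}^{(−1)} satisfy ‖T_{nλ}‖ + ‖T_{nλ}^{(−1)}‖ ≤ w_n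
for all |λ| = 1, and the peripheral spectrum σ(T) ∩ 𝕋 has one-dimensional Hausdorff
measure zero, then for every strictly increasing sequence (m_n) of positive integers,
‖T^n‖ · s_{m_n n} / w_{m_n} → 0, where s_{nk} = (Σ_{j≥k+1} t_{nj}) / σ_n. -/
theorem stmt12 {X : Type*} [NormedAddCommGroup X] [NormedSpace ℂ X] [CompleteSpace X]
    (T : X →L[ℂ] X)
    (t : ℕ → ℕ → ℝ)
    (ht_nonneg : ∀ n j, 0 ≤ t n j)
    (ht_sum : ∀ n, HasSum (t n) 1)
    (Tn : ℕ → X →L[ℂ] X)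
    (hTn : ∀ n, HasSum (fun j : ℕ => t n j • T ^ j) (Tn n))
    (ht0 : ∀ n, t n 0 ≠ 1)
    (sig : ℕ → ℝ)
    (hsig : ∀ n, HasSum (fun j : ℕ => (j : ℝ) * t n j) (sig n))
    (hsig_top : Tendsto sig atTop atTop)
    (s : ℕ → ℕ → ℝ)
    (hs : ∀ n k, s n k = (∑' j : ℕ, if k < j then t n j else 0) / sig n)
    (Tlam Tlaminv : ℕ → ℂ → X →L[ℂ] X)
    (hTlam : ∀ n (lam : ℂ), ‖lam‖ = 1 →
      HasSum (fun j => ((t n j : ℂ) * lam ^ j) • T ^ j) (Tlam n lam))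
    (hTlaminv : ∀ n (lam : ℂ), ‖lam‖ = 1 →
      HasSum (fun k => ((s n k : ℂ) * lam ^ k) • T ^ k) (Tlaminv n lam))
    (w : ℕ → ℝ) (hw_mono : Monotone w) (hw_pos : ∀ n, 0 < w n)
    (hbound : ∀ n (lam : ℂ), ‖lam‖ = 1 → ‖Tlam n lam‖ + ‖Tlaminv n lam‖ ≤ w n)
    (hspec : (MeasureTheory.Measure.hausdorffMeasure 1 : Measure ℂ)
      (spectrum ℂ T ∩ Metric.sphere (0 : ℂ) 1) = 0) :
    ∀ mseq : ℕ → ℕ, StrictMono mseq → (∀ n, 0 < mseq n) →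
      Tendsto (fun n => ‖T ^ n‖ * s (mseq n) n / w (mseq n)) atTop (𝓝 0) := by
  intro m hm _
  have h_unif := stmt12_general (σ := fun n => sig n) T
    (fun n => Complex.hasSum_ofReal.2 (ht_sum n))
    ((RCLike.tendsto_ofReal_atTop_cobounded ℂ).comp hsig_top)
    (fun n k => by simp [hs, Complex.ofReal_tsum, apply_ite]) hTlam hTlaminv (hw_pos 0)
    (fun n => hw_mono n.zero_le) hbound hspec
  simpa [Function.comp_def, tendsto_zero_iff_norm_tendsto_zero, abs_of_pos, hw_pos] using
    h_unif.comp (hm.tendsto_atTop.prodMk tendsto_top)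
end

section
/- Let p ≥ 2 be an integer, r ≥ 0 a real number, and T ∈ B(X). Then sup over all integers n ≥ 1 and all λ ∈ ℂ with |λ| = 1 of n^{−r} ‖M_n^{(p)}(λT)‖ is finite if and only if for every λ ∈ ℂ with |λ| > 1 the operator T − λI is invertible and sup_{|λ|>1} ((|λ|−1)^{r+1}/|λ|^r) · ‖(T − λI)^{−1}‖ < ∞. -/
open Filter Topology

/-- The Cesàro mean of order p of an operator S:
M_n^{(p)}(S) = (p/((n+1)⋯(n+p))) Σ_{j=0}^n ((n−j+p−1)!/(n−j)!) S^j. -/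
noncomputable def cesaroMean {X : Type*} [NormedAddCommGroup X] [NormedSpace ℂ X]
    (p : ℕ) (S : X →L[ℂ] X) (n : ℕ) : X →L[ℂ] X :=
  ((p : ℂ) / ∏ i ∈ Finset.range p, ((n : ℂ) + 1 + i)) •
    ∑ j ∈ Finset.range (n + 1),
      (((n - j + p - 1).factorial : ℂ) / ((n - j).factorial : ℂ)) • S ^ j


/-
The partial sums of order `p` of the powers of `a` are the Taylor coefficients of
`(1 - z)⁻ᵖ (1 - z a)⁻¹`. Cesàro boundedness makes these coefficients `O(n ^ (p + r))`, uniformly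
under rotations of `a`; summing the series at a real `t < 1`, where `(1 - t) ^ p` cancels exactly
the loss coming from the order of the mean, bounds the resolvent on the ray, and rotating covers
the disc. Conversely, Cauchy's estimate on the circle of radius `ρ = 1 - 1 / (2 n)` recovers the
coefficient bound: for `p ≥ 2` the factor `|1 - z|⁻ᵖ` is at most `(1 - ρ) ^ (2 - p) |1 - z|⁻²`, and
`|1 - z|⁻²` is a multiple of the Poisson kernel, with mean only `(1 - ρ²)⁻¹`.
-/

/-- The iterated partial sums of the powers of `a`: order `0` is the sequence `a ^ n` itself, and
each further order sums once more. These are the unnormalized Cesàro means. -/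
def cesaroSum {A : Type*} [Semiring A] : ℕ → A → ℕ → A
  | 0, a, n => a ^ n
  | p + 1, a, n => ∑ k ∈ Finset.range (n + 1), cesaroSum p a k

/-- Growth `O(n ^ r)` of the Cesàro means of order `p` of `a`, uniformly over its rotations. For
`1 ≤ p` the mean of order `p` is `cesaroSum p a n` divided by the total weight
`(n + p).choose p`. -/
def IsCesaroBounded {A : Type*} [NormedRing A] [NormedAlgebra ℂ A] (p : ℕ) (r : ℝ) (a : A) : Prop :=
  ∃ C : ℝ, ∀ n : ℕ, 1 ≤ n → ∀ lam : ℂ, ‖lam‖ = 1 →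
    (n : ℝ) ^ (-r) * ‖((n + p).choose p : ℂ)⁻¹ • cesaroSum p (lam • a) n‖ ≤ C

/-- The Kreiss resolvent condition of exponent `r`; the classical one is `r = 0`. -/
def IsKreissBounded {A : Type*} [NormedRing A] [NormedAlgebra ℂ A] (r : ℝ) (a : A) : Prop :=
  (∀ lam : ℂ, 1 < ‖lam‖ → lam ∈ resolventSet ℂ a) ∧
    ∃ C : ℝ, ∀ lam : ℂ, 1 < ‖lam‖ →
      (‖lam‖ - 1) ^ (r + 1) / ‖lam‖ ^ r * ‖resolvent a lam‖ ≤ C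

section CesaroSum

variable {A : Type*} [Semiring A]

theorem cesaroSum_succ_succ (p : ℕ) (a : A) (n : ℕ) :
    cesaroSum (p + 1) a (n + 1) = cesaroSum (p + 1) a n + cesaroSum p a (n + 1) :=
  Finset.sum_range_succ _ _

theorem cesaroSum_zero_right (p : ℕ) (a : A) : cesaroSum p a 0 = 1 := by
  induction p with
  | zero => exact pow_zero a
  | succ p ih => simpa [cesaroSum] using ih

theorem cesaroSum_succ_eq_sum_choose (p : ℕ) (a : A) (n : ℕ) :
    cesaroSum (p + 1) a n = ∑ j ∈ Finset.range (n + 1), (n - j + p).choose p • a ^ j := by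
  induction p generalizing n with
  | zero => simp [cesaroSum]
  | succ p ihp =>
    induction n with
    | zero => simp [cesaroSum_zero_right]
    | succ n ihn =>
      have pascal : ∀ j ∈ Finset.range (n + 1),
          (n - j + (p + 1)).choose (p + 1) • a ^ j + (n + 1 - j + p).choose p • a ^ j =
            (n + 1 - j + (p + 1)).choose (p + 1) • a ^ j := fun j hj ↦ by
        have hj : j ≤ n := Finset.mem_range_succ_iff.1 hj
        rw [← add_smul, add_comm, Nat.sub_add_comm hj, ← add_assoc (n - j + 1) p 1,
          Nat.choose_succ_succ, add_right_comm (n - j) 1 p, add_assoc (n - j) p 1]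
      rw [cesaroSum_succ_succ, ihn, ihp, Finset.sum_range_succ _ (n + 1),
        Finset.sum_range_succ _ (n + 1), ← add_assoc, ← Finset.sum_add_distrib,
        Finset.sum_congr rfl pascal]
      simp

end CesaroSum

section GeneratingFunction

variable {𝕜 A : Type*}

theorem hasSum_smul_cesaroSum_of_succ [NormedField 𝕜] [NormedRing A] [NormedAlgebra 𝕜 A]
    {p : ℕ} {a F : A} {z : 𝕜} (h : HasSum (fun n ↦ z ^ n • cesaroSum (p + 1) a n) F) :
    HasSum (fun n ↦ z ^ n • cesaroSum p a n) ((1 - z) • F) := by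
  rw [← hasSum_nat_add_iff' 1]
  convert! ((hasSum_nat_add_iff' 1).2 h).sub (h.const_smul z) using 1
  · funext n
    rw [cesaroSum_succ_succ, smul_smul, ← pow_succ', ← smul_sub, add_sub_cancel_left]
  · simp only [sub_smul, one_smul, Finset.sum_range_one, cesaroSum_zero_right]
    abel

theorem hasSum_pow_of_hasSum_smul_cesaroSum [NormedField 𝕜] [NormedRing A] [NormedAlgebra 𝕜 A]
    {p : ℕ} {a F : A} {z : 𝕜} (h : HasSum (fun n ↦ z ^ n • cesaroSum p a n) F) :
    HasSum (fun n ↦ (z • a) ^ n) ((1 - z) ^ p • F) := by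
  induction p generalizing F with
  | zero => simpa [cesaroSum, smul_pow] using h
  | succ p ih => simpa only [smul_smul, ← pow_succ] using ih (hasSum_smul_cesaroSum_of_succ h)

theorem ringInverse_eq_of_mul_eq_one {R : Type*} [MonoidWithZero R] {u v : R} (huv : u * v = 1)
    (hvu : v * u = 1) : Ring.inverse u = v :=
  Ring.inverse_unit ⟨u, v, huv, hvu⟩

theorem isUnit_and_ringInverse_one_sub_smul_of_hasSum [NormedField 𝕜] [NormedRing A]
    [NormedAlgebra 𝕜 A] {p : ℕ} {a F : A} {z : 𝕜}
    (h : HasSum (fun n ↦ z ^ n • cesaroSum p a n) F) :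
    IsUnit (1 - z • a) ∧ Ring.inverse (1 - z • a) = (1 - z) ^ p • F := by
  have geom := hasSum_pow_of_hasSum_smul_cesaroSum h
  have right_inv := geom.summable.one_sub_mul_tsum_pow
  have left_inv := geom.summable.tsum_pow_mul_one_sub
  rw [geom.tsum_eq] at right_inv left_inv
  exact ⟨isUnit_iff_exists.2 ⟨_, right_inv, left_inv⟩,
    ringInverse_eq_of_mul_eq_one right_inv left_inv⟩

theorem summable_norm_smul_cesaroSum [NormedField 𝕜] [NormedRing A] [NormedAlgebra 𝕜 A]
    (p : ℕ) {a : A} {z : 𝕜} (hz : ‖z‖ < 1) (hza : ‖z • a‖ < 1) :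
    Summable fun n ↦ ‖z ^ n • cesaroSum p a n‖ := by
  induction p with
  | zero => simpa only [cesaroSum, smul_pow] using summable_norm_geometric_of_norm_lt_one hza
  | succ p ih =>
    have product := summable_norm_sum_mul_range_of_summable_norm ih.norm
      (summable_norm_geometric_of_norm_lt_one (r := ‖z‖) (by simpa using hz))
    refine product.of_nonneg_of_le (fun n ↦ norm_nonneg _) fun n ↦ ?_
    rw [cesaroSum, Finset.smul_sum]
    refine (norm_sum_le_of_le _ fun k hk ↦ ?_).trans (le_abs_self _)
    rw [← Nat.add_sub_of_le (Finset.mem_range_succ_iff.1 hk), Nat.add_sub_cancel_left, pow_add,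
      mul_comm (z ^ k), mul_smul, norm_smul, norm_pow, mul_comm]

theorem hasFPowerSeriesAt_inv_pow_smul_ringInverse [NontriviallyNormedField 𝕜] [NormedRing A]
    [NormedAlgebra 𝕜 A] [CompleteSpace A] (p : ℕ) (a : A) :
    HasFPowerSeriesAt (fun z : 𝕜 ↦ ((1 - z) ^ p)⁻¹ • Ring.inverse (1 - z • a))
      (fun n ↦ ContinuousMultilinearMap.mkPiRing 𝕜 (Fin n) (cesaroSum p a n)) 0 := by
  have small : ∀ᶠ z : 𝕜 in 𝓝 0, ‖z‖ < 1 ∧ ‖z • a‖ < 1 :=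
    (Continuous.tendsto' (by fun_prop) 0 (0 : ℝ) (by simp)).eventually_lt_const one_pos |>.and <|
      (Continuous.tendsto' (by fun_prop) 0 (0 : ℝ) (by simp)).eventually_lt_const one_pos
  refine hasFPowerSeriesAt_iff.2 (small.mono fun z ⟨hz, hza⟩ ↦ ?_)
  have sum := (summable_norm_smul_cesaroSum p hz hza).of_norm.hasSum
  have ne : (1 - z) ^ p ≠ 0 :=
    pow_ne_zero _ (sub_ne_zero.2 fun h ↦ by simp [← h] at hz)
  rw [zero_add, (isUnit_and_ringInverse_one_sub_smul_of_hasSum sum).2, inv_smul_smul₀ ne]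
  simpa [FormalMultilinearSeries.coeff] using sum

end GeneratingFunction

section AbelSum

theorem rpow_le_one_add_pow {x α : ℝ} {m : ℕ} (hx : 0 ≤ x) (hα : 0 ≤ α) (hm : α ≤ m) :
    x ^ α ≤ 1 + x ^ m := by
  rcases le_total x 1 with hx1 | hx1
  · exact (Real.rpow_le_one hx hx1 hα).trans (le_add_of_nonneg_right (pow_nonneg hx m))
  · rw [← Real.rpow_natCast]
    exact (Real.rpow_le_rpow_of_exponent_le hx1 hm).trans (le_add_of_nonneg_left zero_le_one)

theorem add_one_pow_le_factorial_mul_choose (n p : ℕ) :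
    ((n : ℝ) + 1) ^ p ≤ p.factorial * (n + p).choose p := by
  exact_mod_cast (Nat.pow_succ_le_ascFactorial (n + 1) p).trans_eq
    (Nat.ascFactorial_eq_factorial_mul_choose n p)

theorem exists_hasSum_add_one_rpow_mul_pow {α t : ℝ} (hα : 0 ≤ α) (ht₀ : 0 ≤ t) (ht₁ : t < 1) :
    ∃ s, HasSum (fun n : ℕ ↦ ((n : ℝ) + 1) ^ α * t ^ n) s ∧
      (1 - t) ^ (α + 1) * s ≤ 1 + ⌈α⌉₊.factorial := by
  set m := ⌈α⌉₊
  have pos : 0 < 1 - t := sub_pos.2 ht₁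
  have pos_rpow : 0 < (1 - t) ^ α := Real.rpow_pos_of_pos pos α
  have norm_lt : ‖t‖ < 1 := by rwa [Real.norm_of_nonneg ht₀]
  -- After scaling by `(1 - t) ^ α`, the real power is a function of `(n + 1) * (1 - t)`, which
  -- is comparable to an integer power.
  have term_le (n : ℕ) : (1 - t) ^ α * (((n : ℝ) + 1) ^ α * t ^ n) ≤
      t ^ n + (1 - t) ^ m * m.factorial * ((n + m).choose m * t ^ n) := by
    calc (1 - t) ^ α * (((n : ℝ) + 1) ^ α * t ^ n)
        = ((1 - t) * (n + 1)) ^ α * t ^ n := by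
          rw [Real.mul_rpow pos.le (by positivity), mul_assoc]
      _ ≤ (1 + ((1 - t) * (n + 1)) ^ m) * t ^ n := by
          gcongr
          exact rpow_le_one_add_pow (by positivity) hα (Nat.le_ceil α)
      _ = t ^ n + (1 - t) ^ m * (n + 1) ^ m * t ^ n := by
          rw [add_mul, one_mul, mul_pow]
      _ ≤ t ^ n + (1 - t) ^ m * (m.factorial * (n + m).choose m) * t ^ n := by
          gcongr
          exact add_one_pow_le_factorial_mul_choose n m
      _ = _ := by ring
  have majorant := (hasSum_geometric_of_lt_one ht₀ ht₁).add
    ((hasSum_choose_mul_geometric_of_norm_lt_one m norm_lt).mul_left ((1 - t) ^ m * m.factorial))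
  have summable : Summable fun n : ℕ ↦ ((n : ℝ) + 1) ^ α * t ^ n :=
    (summable_mul_left_iff pos_rpow.ne').1
      (majorant.summable.of_nonneg_of_le (fun n ↦ by positivity) term_le)
  refine ⟨_, summable.hasSum, ?_⟩
  calc (1 - t) ^ (α + 1) * ∑' n : ℕ, ((n : ℝ) + 1) ^ α * t ^ n
      = (1 - t) * ((1 - t) ^ α * ∑' n : ℕ, ((n : ℝ) + 1) ^ α * t ^ n) := by
        rw [Real.rpow_add_one pos.ne']; ring
    _ ≤ (1 - t) * ((1 - t)⁻¹ + (1 - t) ^ m * m.factorial * (1 / (1 - t) ^ (m + 1))) := by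
        gcongr
        exact hasSum_le term_le (summable.hasSum.mul_left _) majorant
    _ = 1 + m.factorial := by field_simp; ring

theorem isUnit_and_norm_ringInverse_le_of_norm_cesaroSum_le {𝕜 A : Type*} [RCLike 𝕜]
    [NormedRing A] [NormedAlgebra 𝕜 A] [CompleteSpace A] {p : ℕ} {r B t : ℝ} {a : A}
    (hpr : 0 ≤ p + r) (h : ∀ n : ℕ, ‖cesaroSum p a n‖ ≤ B * ((n : ℝ) + 1) ^ (p + r))
    (ht₀ : 0 ≤ t) (ht₁ : t < 1) :
    IsUnit (1 - (t : 𝕜) • a) ∧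
      (1 - t) ^ (r + 1) * ‖Ring.inverse (1 - (t : 𝕜) • a)‖ ≤
        B * (1 + ⌈p + r⌉₊.factorial) := by
  have pos : 0 < 1 - t := sub_pos.2 ht₁
  have B_nonneg : 0 ≤ B := (norm_nonneg _).trans (by simpa using h 0)
  obtain ⟨s, hs, hs_le⟩ := exists_hasSum_add_one_rpow_mul_pow hpr ht₀ ht₁
  have term_le (n : ℕ) :
      ‖(t : 𝕜) ^ n • cesaroSum p a n‖ ≤ B * (((n : ℝ) + 1) ^ (p + r) * t ^ n) := by
    rw [norm_smul, norm_pow, RCLike.norm_of_nonneg ht₀, ← mul_assoc, mul_comm]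
    gcongr
    exact h n
  have sum := (Summable.of_norm_bounded (hs.mul_left B).summable term_le).hasSum
  obtain ⟨unit, inverse_eq⟩ := isUnit_and_ringInverse_one_sub_smul_of_hasSum sum
  have norm_weight : ‖(1 - (t : 𝕜)) ^ p‖ = (1 - t) ^ (p : ℝ) := by
    rw [norm_pow, ← RCLike.ofReal_one, ← RCLike.ofReal_sub, RCLike.norm_of_nonneg pos.le,
      Real.rpow_natCast]
  refine ⟨unit, ?_⟩
  calc (1 - t) ^ (r + 1) * ‖Ring.inverse (1 - (t : 𝕜) • a)‖
      = (1 - t) ^ (p + r + 1) * ‖∑' n, (t : 𝕜) ^ n • cesaroSum p a n‖ := by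
        rw [inverse_eq, norm_smul, norm_weight, ← mul_assoc, ← Real.rpow_add pos]
        ring_nf
    _ ≤ (1 - t) ^ (p + r + 1) * (B * s) := by
        gcongr
        exact tsum_of_norm_bounded (hs.mul_left B) term_le
    _ = B * ((1 - t) ^ (p + r + 1) * s) := mul_left_comm _ _ _
    _ ≤ B * (1 + ⌈p + r⌉₊.factorial) := by gcongr

end AbelSum

section CauchyEstimate

theorem norm_coeff_le_circleAverage {E : Type*} [NormedAddCommGroup E] [NormedSpace ℂ E]
    [CompleteSpace E] {f : ℂ → E} {P : FormalMultilinearSeries ℂ ℂ E} {c : ℂ} {ρ : ℝ} (hρ : 0 < ρ)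
    (hf : DifferentiableOn ℂ f (Metric.closedBall c ρ)) (hP : HasFPowerSeriesAt f P c) (n : ℕ) :
    ‖P.coeff n‖ ≤ Real.circleAverage (fun z ↦ ‖f z‖) c ρ * ρ⁻¹ ^ n := by
  lift ρ to NNReal using hρ.le
  have cauchy := hf.hasFPowerSeriesOnBall (by exact_mod_cast hρ)
  rw [← FormalMultilinearSeries.norm_apply_eq_norm_coef,
    hP.eq_formalMultilinearSeries cauchy.hasFPowerSeriesAt]
  simpa [Real.circleAverage_def] using norm_cauchyPowerSeries_le f c ρ n

theorem circleAverage_inv_norm_one_sub_sq {ρ : ℝ} (hρ₀ : 0 < ρ) (hρ₁ : ρ < 1) :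
    Real.circleAverage (fun z ↦ (‖1 - z‖ ^ 2)⁻¹) 0 ρ = (1 - ρ ^ 2)⁻¹ := by
  have pos : 0 < 1 - ρ ^ 2 := by nlinarith
  -- The Poisson kernel at `ρ ^ 2`, the reflection of the point `1` in the circle of radius `ρ`.
  have kernel_eq : Set.EqOn (poissonKernel 0 ((ρ ^ 2 : ℝ) : ℂ))
      (fun z ↦ (1 - ρ ^ 2) • (‖1 - z‖ ^ 2)⁻¹) (Metric.sphere 0 |ρ|) := fun z hz ↦ by
    have norm_z : ‖z‖ ^ 2 = ρ ^ 2 := by rw [mem_sphere_zero_iff_norm.1 hz, sq_abs]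
    have norm_reflection : ‖z - ((ρ ^ 2 : ℝ) : ℂ)‖ ^ 2 = ρ ^ 2 * ‖1 - z‖ ^ 2 := by
      simp only [← Complex.normSq_eq_norm_sq, Complex.normSq_apply, Complex.sub_re,
        Complex.sub_im, Complex.ofReal_re, Complex.ofReal_im, Complex.one_re,
        Complex.one_im] at norm_z ⊢
      linear_combination (1 - ρ ^ 2) * norm_z
    rw [poissonKernel_def, sub_zero, sub_zero, norm_reflection, norm_z, Complex.norm_real,
      Real.norm_eq_abs, sq_abs]
    change _ = (1 - ρ ^ 2) * (‖1 - z‖ ^ 2)⁻¹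
    field_simp
  have mem_ball : ((ρ ^ 2 : ℝ) : ℂ) ∈ Metric.ball (0 : ℂ) ρ := by
    rw [mem_ball_zero_iff, Complex.norm_real, Real.norm_of_nonneg (sq_nonneg ρ)]
    nlinarith
  have mean_one : Real.circleAverage (poissonKernel 0 ((ρ ^ 2 : ℝ) : ℂ)) 0 ρ = 1 := by
    have poisson := InnerProductSpace.HarmonicOnNhd.circleAverage_poissonKernel_smul
      (fun x _ ↦ InnerProductSpace.harmonicAt_const (1 : ℝ)) mem_ball
    simpa only [smul_eq_mul, Pi.mul_def, mul_one] using poisson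
  rw [Real.circleAverage_congr_sphere kernel_eq, Real.circleAverage_fun_smul, smul_eq_mul]
    at mean_one
  exact eq_inv_of_mul_eq_one_right mean_one

theorem one_sub_le_norm_one_sub {𝕜 : Type*} [NormedRing 𝕜] [NormOneClass 𝕜] (z : 𝕜) :
    1 - ‖z‖ ≤ ‖1 - z‖ := by
  simpa only [norm_one] using norm_sub_norm_le 1 z

theorem differentiableAt_inv_pow_smul_ringInverse {𝕜 A : Type*} [NontriviallyNormedField 𝕜]
    [NormedRing A] [NormedAlgebra 𝕜 A] [HasSummableGeomSeries A] (p : ℕ) {a : A} {z : 𝕜}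
    (hz : 1 - z ≠ 0) (unit : IsUnit (1 - z • a)) :
    DifferentiableAt 𝕜 (fun z : 𝕜 ↦ ((1 - z) ^ p)⁻¹ • Ring.inverse (1 - z • a)) z := by
  have inner : DifferentiableAt 𝕜 (fun z : 𝕜 ↦ 1 - z • a) z := by fun_prop
  have inverse : DifferentiableAt 𝕜 (fun z : 𝕜 ↦ Ring.inverse (1 - z • a)) z :=
    DifferentiableAt.comp (g := Ring.inverse) z (differentiableAt_inverse unit) inner
  have weight : DifferentiableAt 𝕜 (fun z : 𝕜 ↦ ((1 - z) ^ p)⁻¹) z :=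
    DifferentiableAt.fun_inv (by fun_prop) (pow_ne_zero p hz)
  exact weight.fun_smul inverse

theorem circleIntegrable_inv_norm_one_sub_pow {ρ : ℝ} (hρ : |ρ| < 1) (k : ℕ) :
    CircleIntegrable (fun z ↦ (‖1 - z‖ ^ k)⁻¹) 0 ρ := by
  refine ContinuousOn.circleIntegrable' (ContinuousOn.inv₀ (by fun_prop) fun z hz ↦ ?_)
  have norm_pos : 0 < ‖1 - z‖ := (sub_pos.2 hρ).trans_le <| by
    simpa only [mem_sphere_zero_iff_norm.1 hz] using one_sub_le_norm_one_sub z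
  exact (pow_pos norm_pos k).ne'

theorem circleAverage_inv_norm_one_sub_pow_le {ρ : ℝ} (hρ₀ : 0 < ρ) (hρ₁ : ρ < 1) (q : ℕ) :
    Real.circleAverage (fun z ↦ (‖1 - z‖ ^ (q + 2))⁻¹) 0 ρ ≤ ((1 - ρ) ^ (q + 1))⁻¹ := by
  have pos : 0 < 1 - ρ := sub_pos.2 hρ₁
  have abs_lt : |ρ| < 1 := by rwa [abs_of_pos hρ₀]
  have integrable := circleIntegrable_inv_norm_one_sub_pow abs_lt
  calc Real.circleAverage (fun z ↦ (‖1 - z‖ ^ (q + 2))⁻¹) 0 ρ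
      ≤ Real.circleAverage (fun z ↦ ((1 - ρ) ^ q)⁻¹ • (‖1 - z‖ ^ 2)⁻¹) 0 ρ := by
        refine Real.circleAverage_mono (integrable _) ((integrable 2).const_smul) fun z hz ↦ ?_
        have le_norm : 1 - ρ ≤ ‖1 - z‖ := by
          simpa [mem_sphere_zero_iff_norm.1 hz, abs_of_pos hρ₀] using one_sub_le_norm_one_sub z
        rw [pow_add, mul_inv, smul_eq_mul]
        gcongr
    _ = ((1 - ρ) ^ q)⁻¹ * (1 - ρ ^ 2)⁻¹ := by
        rw [Real.circleAverage_fun_smul, circleAverage_inv_norm_one_sub_sq hρ₀ hρ₁, smul_eq_mul]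
    _ ≤ ((1 - ρ) ^ q)⁻¹ * (1 - ρ)⁻¹ := by
        gcongr
        linarith [mul_pos hρ₀ pos]
    _ = ((1 - ρ) ^ (q + 1))⁻¹ := by rw [pow_succ, mul_inv]

theorem norm_cesaroSum_le_of_norm_ringInverse_le {A : Type*} [NormedRing A] [NormedAlgebra ℂ A]
    [CompleteSpace A] {p : ℕ} {B ρ : ℝ} {a : A} (hp : 2 ≤ p) (hρ₀ : 0 < ρ) (hρ₁ : ρ < 1)
    (unit : ∀ z : ℂ, ‖z‖ ≤ ρ → IsUnit (1 - z • a))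
    (hB : ∀ z : ℂ, ‖z‖ = ρ → ‖Ring.inverse (1 - z • a)‖ ≤ B) (n : ℕ) :
    ‖cesaroSum p a n‖ ≤ B * ((1 - ρ) ^ (p - 1))⁻¹ * ρ⁻¹ ^ n := by
  obtain ⟨q, rfl⟩ := Nat.exists_eq_add_of_le' hp
  have abs_lt : |ρ| < 1 := by rwa [abs_of_pos hρ₀]
  set f : ℂ → A := fun z ↦ ((1 - z) ^ (q + 2))⁻¹ • Ring.inverse (1 - z • a)
  have ne_one {z : ℂ} (hz : ‖z‖ ≤ ρ) : 1 - z ≠ 0 := norm_pos_iff.1 <|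
    (sub_pos.2 (hz.trans_lt hρ₁)).trans_le (one_sub_le_norm_one_sub z)
  have hf : DifferentiableOn ℂ f (Metric.closedBall 0 ρ) := fun z hz ↦
    have hz := mem_closedBall_zero_iff.1 hz
    (differentiableAt_inv_pow_smul_ringInverse _ (ne_one hz) (unit z hz)).differentiableWithinAt
  have cauchy := norm_coeff_le_circleAverage hρ₀ hf
    (hasFPowerSeriesAt_inv_pow_smul_ringInverse (q + 2) a) n
  have B_nonneg : 0 ≤ B := (norm_nonneg _).trans (hB ρ (by simp [hρ₀.le]))
  have norm_f_le {z : ℂ} (hz : z ∈ Metric.sphere 0 |ρ|) : ‖f z‖ ≤ B • (‖1 - z‖ ^ (q + 2))⁻¹ := by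
    rw [norm_smul, norm_inv, norm_pow, smul_eq_mul, mul_comm]
    gcongr
    exact hB z (by simpa [abs_of_pos hρ₀] using hz)
  have average_le : Real.circleAverage (fun z ↦ ‖f z‖) 0 ρ ≤ B * ((1 - ρ) ^ (q + 1))⁻¹ := by
    calc Real.circleAverage (fun z ↦ ‖f z‖) 0 ρ
        ≤ Real.circleAverage (fun z ↦ B • (‖1 - z‖ ^ (q + 2))⁻¹) 0 ρ := by
          have f_integrable : CircleIntegrable (fun z ↦ ‖f z‖) 0 ρ :=
            (hf.continuousOn.norm.mono Metric.sphere_subset_closedBall).circleIntegrable hρ₀.le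
          have majorant_integrable := circleIntegrable_inv_norm_one_sub_pow abs_lt (q + 2)
          exact Real.circleAverage_mono f_integrable majorant_integrable.const_smul
            fun z ↦ norm_f_le
      _ = B * Real.circleAverage (fun z ↦ (‖1 - z‖ ^ (q + 2))⁻¹) 0 ρ := by
          rw [Real.circleAverage_fun_smul, smul_eq_mul]
      _ ≤ B * ((1 - ρ) ^ (q + 1))⁻¹ := by
          gcongr
          exact circleAverage_inv_norm_one_sub_pow_le hρ₀ hρ₁ q
  calc ‖cesaroSum (q + 2) a n‖ ≤ Real.circleAverage (fun z ↦ ‖f z‖) 0 ρ * ρ⁻¹ ^ n := by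
        simpa [FormalMultilinearSeries.coeff] using cauchy
    _ ≤ B * ((1 - ρ) ^ (q + 1))⁻¹ * ρ⁻¹ ^ n := by gcongr

theorem inv_one_sub_inv_two_mul_pow_le_two {n : ℕ} (hn : 1 ≤ n) :
    (1 - (2 * n : ℝ)⁻¹)⁻¹ ^ n ≤ 2 := by
  have n_ge : (1 : ℝ) ≤ n := by exact_mod_cast hn
  have inv_le : (2 * n : ℝ)⁻¹ ≤ 2⁻¹ := by gcongr; linarith
  have bernoulli := one_add_mul_le_pow (a := -(2 * n : ℝ)⁻¹) (by linarith) n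
  rw [← sub_eq_add_neg] at bernoulli
  rw [inv_pow]
  refine inv_le_of_inv_le₀ two_pos (le_trans (le_of_eq ?_) bernoulli)
  field_simp
  norm_num

end CauchyEstimate

section Resolvent

theorem inv_mem_resolventSet_iff {𝕜 A : Type*} [Field 𝕜] [Ring A] [Algebra 𝕜 A] {a : A} {z : 𝕜}
    (hz : z ≠ 0) : z⁻¹ ∈ resolventSet 𝕜 a ↔ IsUnit (1 - z • a) := by
  rw [spectrum.mem_resolventSet_iff, Algebra.algebraMap_eq_smul_one]
  simpa [Units.smul_def] using
    IsUnit.smul_sub_iff_sub_inv_smul (r := Units.mk0 z⁻¹ (inv_ne_zero hz)) (a := a)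

theorem ringInverse_one_sub_smul {𝕜 A : Type*} [Field 𝕜] [Ring A] [Algebra 𝕜 A] {a : A} {z : 𝕜}
    (hz : z ≠ 0) : Ring.inverse (1 - z • a) = z⁻¹ • resolvent a z⁻¹ := by
  have := spectrum.units_smul_resolvent_self (r := Units.mk0 z⁻¹ (inv_ne_zero hz)) (a := a)
  simpa [resolvent, Units.smul_def, eq_comm] using this

theorem one_sub_rpow_mul_norm_ringInverse {𝕜 A : Type*} [NormedField 𝕜] [NormedRing A]
    [NormedAlgebra 𝕜 A] (r : ℝ) (a : A) {z : 𝕜} (hz₀ : z ≠ 0) (hz₁ : ‖z‖ < 1) :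
    (1 - ‖z‖) ^ (r + 1) * ‖Ring.inverse (1 - z • a)‖ =
      (‖z⁻¹‖ - 1) ^ (r + 1) / ‖z⁻¹‖ ^ r * ‖resolvent a z⁻¹‖ := by
  have pos : 0 < ‖z‖ := norm_pos_iff.2 hz₀
  have factor : ‖z‖⁻¹ - 1 = (1 - ‖z‖) * ‖z‖⁻¹ := by field_simp
  rw [ringInverse_one_sub_smul hz₀, norm_smul, norm_inv, factor,
    Real.mul_rpow (sub_pos.2 hz₁).le (inv_pos.2 pos).le, Real.rpow_add_one (inv_pos.2 pos).ne']
  field_simp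

theorem isKreissBounded_iff_forall_norm_lt_one {A : Type*} [NormedRing A] [NormedAlgebra ℂ A]
    {r : ℝ} {a : A} :
    IsKreissBounded r a ↔ ∃ C : ℝ, ∀ z : ℂ, ‖z‖ < 1 → IsUnit (1 - z • a) ∧
      (1 - ‖z‖) ^ (r + 1) * ‖Ring.inverse (1 - z • a)‖ ≤ C := by
  constructor
  · rintro ⟨mem, C, hC⟩
    refine ⟨max C ‖(1 : A)‖, fun z hz ↦ ?_⟩
    rcases eq_or_ne z 0 with rfl | hz₀
    · simp
    · have one_lt : 1 < ‖z⁻¹‖ := by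
        rw [norm_inv]; exact (one_lt_inv₀ (norm_pos_iff.2 hz₀)).2 hz
      refine ⟨(inv_mem_resolventSet_iff hz₀).1 (mem _ one_lt), le_max_of_le_left ?_⟩
      exact (one_sub_rpow_mul_norm_ringInverse r a hz₀ hz).trans_le (hC _ one_lt)
  · rintro ⟨C, hC⟩
    have inv_spec {lam : ℂ} (hlam : 1 < ‖lam‖) : lam⁻¹ ≠ 0 ∧ ‖lam⁻¹‖ < 1 :=
      ⟨inv_ne_zero (norm_pos_iff.1 (one_pos.trans hlam)), by
        rw [norm_inv]; exact inv_lt_one_of_one_lt₀ hlam⟩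
    refine ⟨fun lam hlam ↦ ?_, C, fun lam hlam ↦ ?_⟩ <;> obtain ⟨ne, lt⟩ := inv_spec hlam
    · simpa only [inv_inv] using (inv_mem_resolventSet_iff ne).2 (hC _ lt).1
    · simpa only [inv_inv] using
        (one_sub_rpow_mul_norm_ringInverse r a ne lt).symm.trans_le (hC _ lt).2

theorem isKreissBounded_iff_forall_inverse {A : Type*} [NormedRing A] [NormedAlgebra ℂ A] {r : ℝ}
    {a : A} :
    IsKreissBounded r a ↔
      (∀ lam : ℂ, 1 < ‖lam‖ → ∃ s : A, (a - lam • 1) * s = 1 ∧ s * (a - lam • 1) = 1) ∧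
      ∃ C : ℝ, ∀ lam : ℂ, 1 < ‖lam‖ → ∀ s : A, (a - lam • 1) * s = 1 → s * (a - lam • 1) = 1 →
        (‖lam‖ - 1) ^ (r + 1) / ‖lam‖ ^ r * ‖s‖ ≤ C := by
  have mem_iff (lam : ℂ) : lam ∈ resolventSet ℂ a ↔
      ∃ s : A, (a - lam • 1) * s = 1 ∧ s * (a - lam • 1) = 1 := by
    rw [spectrum.mem_resolventSet_iff, Algebra.algebraMap_eq_smul_one, IsUnit.sub_iff,
      isUnit_iff_exists]
  have norm_resolvent {lam : ℂ} {s : A} (right_inv : (a - lam • 1) * s = 1)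
      (left_inv : s * (a - lam • 1) = 1) : ‖resolvent a lam‖ = ‖s‖ := by
    rw [resolvent, Algebra.algebraMap_eq_smul_one, ← neg_sub a, ← norm_neg s]
    exact congrArg norm (ringInverse_eq_of_mul_eq_one (by rwa [neg_mul_neg]) (by rwa [neg_mul_neg]))
  simp only [IsKreissBounded, mem_iff]
  refine and_congr_right fun invertible ↦ exists_congr fun C ↦ forall₂_congr fun lam hlam ↦ ?_
  obtain ⟨s, right_inv, left_inv⟩ := invertible lam hlam
  refine ⟨fun h u hu hu' ↦ norm_resolvent hu hu' ▸ h, fun h ↦ ?_⟩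
  exact norm_resolvent right_inv left_inv ▸ h s right_inv left_inv

end Resolvent

section Equivalence

variable {A : Type*} [NormedRing A] [NormedAlgebra ℂ A]

theorem rpow_neg_mul_norm_inv_choose_smul_le_iff {n p : ℕ} {r C : ℝ} {b : A} (hn : 1 ≤ n) :
    (n : ℝ) ^ (-r) * ‖((n + p).choose p : ℂ)⁻¹ • b‖ ≤ C ↔
      ‖b‖ ≤ (n + p).choose p * ((n : ℝ) ^ r * C) := by
  have n_pos : (0 : ℝ) < n := by exact_mod_cast hn
  have weight_pos : (0 : ℝ) < (n + p).choose p := by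
    exact_mod_cast Nat.choose_pos (Nat.le_add_left p n)
  rw [norm_smul, norm_inv, Complex.norm_natCast, Real.rpow_neg n_pos.le,
    inv_mul_le_iff₀ (Real.rpow_pos_of_pos n_pos r), inv_mul_le_iff₀ weight_pos]

theorem isCesaroBounded_iff_norm_cesaroSum_le {p : ℕ} {r : ℝ} {a : A} :
    IsCesaroBounded p r a ↔ ∃ C : ℝ, ∀ n : ℕ, 1 ≤ n → ∀ lam : ℂ, ‖lam‖ = 1 →
      ‖cesaroSum p (lam • a) n‖ ≤ C * (n : ℝ) ^ (p + r) := by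
  constructor
  · rintro ⟨C, hC⟩
    have C_nonneg : 0 ≤ C := le_trans (by positivity) (hC 1 le_rfl 1 norm_one)
    refine ⟨C * 2 ^ p, fun n hn lam hlam ↦ ?_⟩
    have n_ge : (1 : ℝ) ≤ n := by exact_mod_cast hn
    have n_pos : (0 : ℝ) < n := by linarith
    have weight_le : ((n + p).choose p : ℝ) ≤ (2 * n) ^ p := by
      calc ((n + p).choose p : ℝ) ≤ (n + 1) ^ p := by
            exact_mod_cast Nat.choose_add_le_add_one_pow n p
        _ ≤ (2 * n) ^ p := by gcongr; linarith
    calc ‖cesaroSum p (lam • a) n‖ ≤ (n + p).choose p * ((n : ℝ) ^ r * C) :=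
          (rpow_neg_mul_norm_inv_choose_smul_le_iff hn).1 (hC n hn lam hlam)
      _ ≤ (2 * n) ^ p * ((n : ℝ) ^ r * C) := by gcongr
      _ = C * 2 ^ p * (n : ℝ) ^ (p + r) := by
        rw [Real.rpow_add n_pos, Real.rpow_natCast]; ring
  · rintro ⟨C, hC⟩
    have C_nonneg : 0 ≤ C := (norm_nonneg _).trans (by simpa using hC 1 le_rfl 1 norm_one)
    refine ⟨C * p.factorial, fun n hn lam hlam ↦ ?_⟩
    rw [rpow_neg_mul_norm_inv_choose_smul_le_iff hn]
    have n_pos : (0 : ℝ) < n := by exact_mod_cast hn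
    have le_weight : (n : ℝ) ^ p ≤ p.factorial * (n + p).choose p :=
      le_trans (by gcongr; linarith) (add_one_pow_le_factorial_mul_choose n p)
    calc ‖cesaroSum p (lam • a) n‖ ≤ C * (n : ℝ) ^ (p + r) := hC n hn lam hlam
      _ = C * (n : ℝ) ^ r * (n : ℝ) ^ p := by
        rw [Real.rpow_add n_pos, Real.rpow_natCast]; ring
      _ ≤ C * (n : ℝ) ^ r * (p.factorial * (n + p).choose p) := by gcongr
      _ = _ := by ring

variable [CompleteSpace A]

theorem norm_cesaroSum_le_of_forall_norm_lt_one {p : ℕ} {r C : ℝ} {a : A} (hp : 2 ≤ p)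
    (h : ∀ z : ℂ, ‖z‖ < 1 → IsUnit (1 - z • a) ∧
      (1 - ‖z‖) ^ (r + 1) * ‖Ring.inverse (1 - z • a)‖ ≤ C) {n : ℕ} (hn : 1 ≤ n) :
    ‖cesaroSum p a n‖ ≤ 2 * C * (2 * n : ℝ) ^ (p + r) := by
  have n_ge : (1 : ℝ) ≤ n := by exact_mod_cast hn
  have n_pos : (0 : ℝ) < 2 * n := by linarith
  set ρ : ℝ := 1 - (2 * n : ℝ)⁻¹
  have one_sub : 1 - ρ = (2 * n : ℝ)⁻¹ := sub_sub_cancel _ _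
  have hρ₁ : ρ < 1 := sub_lt_self _ (by positivity)
  have hρ₀ : 0 < ρ := sub_pos.2 (inv_lt_one_of_one_lt₀ (by linarith))
  have norm_one_le : ‖(1 : A)‖ ≤ C := by simpa using (h 0 (by simp)).2
  have C_nonneg : 0 ≤ C := (norm_nonneg _).trans norm_one_le
  have inverse_le (z : ℂ) (hz : ‖z‖ = ρ) :
      ‖Ring.inverse (1 - z • a)‖ ≤ C * (2 * n : ℝ) ^ (r + 1) := by
    have := (h z (hz.trans_lt hρ₁)).2
    rwa [hz, one_sub, Real.inv_rpow n_pos.le, inv_mul_le_iff₀ (by positivity), mul_comm] at this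
  have coeff_le := norm_cesaroSum_le_of_norm_ringInverse_le hp hρ₀ hρ₁
    (fun z hz ↦ (h z (hz.trans_lt hρ₁)).1) inverse_le n
  calc ‖cesaroSum p a n‖
      ≤ C * (2 * n : ℝ) ^ (r + 1) * ((1 - ρ) ^ (p - 1))⁻¹ * ρ⁻¹ ^ n := coeff_le
    _ ≤ C * (2 * n : ℝ) ^ (r + 1) * ((1 - ρ) ^ (p - 1))⁻¹ * 2 := by
        gcongr
        exact inv_one_sub_inv_two_mul_pow_le_two hn
    _ = 2 * C * ((2 * n : ℝ) ^ (r + 1) * (2 * n : ℝ) ^ ((p - 1 : ℕ) : ℝ)) := by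
        rw [one_sub, inv_pow, inv_inv, Real.rpow_natCast]; ring
    _ = 2 * C * (2 * n : ℝ) ^ (p + r) := by
        rw [← Real.rpow_add n_pos, Nat.cast_pred (by omega)]; ring_nf

theorem IsCesaroBounded.isKreissBounded {p : ℕ} {r : ℝ} {a : A} (hr : -(p : ℝ) ≤ r)
    (h : IsCesaroBounded p r a) : IsKreissBounded r a := by
  obtain ⟨C, hC⟩ := isCesaroBounded_iff_norm_cesaroSum_le.1 h
  have hpr : 0 ≤ p + r := by linarith
  have sum_le {ω : ℂ} (hω : ‖ω‖ = 1) (n : ℕ) :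
      ‖cesaroSum p (ω • a) n‖ ≤ max C ‖(1 : A)‖ * ((n : ℝ) + 1) ^ (p + r) := by
    rcases Nat.eq_zero_or_pos n with rfl | hn
    · simp [cesaroSum_zero_right]
    · calc ‖cesaroSum p (ω • a) n‖ ≤ C * (n : ℝ) ^ (p + r) := hC n hn ω hω
        _ ≤ max C ‖(1 : A)‖ * ((n : ℝ) + 1) ^ (p + r) := by
          gcongr
          · exact le_max_left _ _
          · linarith
  refine isKreissBounded_iff_forall_norm_lt_one.2
    ⟨max C ‖(1 : A)‖ * (1 + ⌈p + r⌉₊.factorial), fun z hz ↦ ?_⟩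
  have rotate : z • a = (‖z‖ : ℂ) • Complex.exp (z.arg * Complex.I) • a := by
    rw [smul_smul, Complex.norm_mul_exp_arg_mul_I]
  rw [rotate]
  exact isUnit_and_norm_ringInverse_le_of_norm_cesaroSum_le hpr
    (sum_le (Complex.norm_exp_ofReal_mul_I z.arg)) (norm_nonneg z) hz

theorem IsKreissBounded.isCesaroBounded {p : ℕ} {r : ℝ} {a : A} (hp : 2 ≤ p)
    (h : IsKreissBounded r a) : IsCesaroBounded p r a := by
  obtain ⟨C, hC⟩ := isKreissBounded_iff_forall_norm_lt_one.1 h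
  refine isCesaroBounded_iff_norm_cesaroSum_le.2
    ⟨2 * C * 2 ^ (p + r), fun n hn lam hlam ↦ ?_⟩
  rw [mul_assoc, ← Real.mul_rpow zero_le_two n.cast_nonneg]
  refine norm_cesaroSum_le_of_forall_norm_lt_one hp (fun z hz ↦ ?_) hn
  have norm_rotate : ‖z * lam‖ = ‖z‖ := by rw [norm_mul, hlam, mul_one]
  simpa only [smul_smul, norm_rotate] using hC (z * lam) (norm_rotate.trans_lt hz)

theorem stmt16_general {p : ℕ} (hp : 2 ≤ p) {r : ℝ} (hr : -(p : ℝ) ≤ r) (a : A) :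
    IsCesaroBounded p r a ↔ IsKreissBounded r a :=
  ⟨fun h ↦ h.isKreissBounded hr, fun h ↦ h.isCesaroBounded hp⟩

end Equivalence

theorem cesaroMean_eq_smul_cesaroSum {X : Type*} [NormedAddCommGroup X] [NormedSpace ℂ X] {p : ℕ}
    (hp : 1 ≤ p) (S : X →L[ℂ] X) (n : ℕ) :
    cesaroMean p S n = ((n + p).choose p : ℂ)⁻¹ • cesaroSum p S n := by
  obtain ⟨q, rfl⟩ := Nat.exists_eq_add_of_le' hp
  have normalization : ∏ i ∈ Finset.range (q + 1), ((n : ℂ) + 1 + i) =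
      (q + 1).factorial * (n + (q + 1)).choose (q + 1) := by
    have := (n + 1).ascFactorial_eq_prod_range (q + 1)
    rw [Nat.ascFactorial_eq_factorial_mul_choose] at this
    exact_mod_cast this.symm
  have weight (m : ℕ) : ((m + q).factorial : ℂ) / m.factorial = q.factorial * (m + q).choose q := by
    rw [div_eq_iff (by exact_mod_cast m.factorial_ne_zero)]
    exact_mod_cast (Nat.add_choose_mul_factorial_mul_factorial m q).symm.trans (by ring)
  rw [cesaroMean, cesaroSum_succ_eq_sum_choose, normalization, Finset.smul_sum, Finset.smul_sum]
  refine Finset.sum_congr rfl fun j _ ↦ ?_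
  have cast_sub : n - j + (q + 1) - 1 = n - j + q := rfl
  rw [cast_sub, weight, ← Nat.cast_smul_eq_nsmul ℂ, smul_smul, smul_smul, Nat.factorial_succ]
  have : (q.factorial : ℂ) ≠ 0 := by exact_mod_cast q.factorial_ne_zero
  congr 1
  push_cast
  field_simp

/-- Kreiss-type equivalence for p ≥ 2: sup_{n≥1,|λ|=1} n^{−r} ‖M_n^{(p)}(λT)‖ < ∞
iff T − λI is invertible for all |λ| > 1 with
sup_{|λ|>1} ((|λ|−1)^{r+1}/|λ|^r) ‖(T − λI)⁻¹‖ < ∞. -/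
theorem stmt16 {X : Type*} [NormedAddCommGroup X] [NormedSpace ℂ X] [CompleteSpace X]
    (T : X →L[ℂ] X)
    (p : ℕ) (hp : 2 ≤ p)
    (r : ℝ) (hr : 0 ≤ r) :
    (∃ C : ℝ, ∀ n : ℕ, 1 ≤ n → ∀ lam : ℂ, ‖lam‖ = 1 →
        (n : ℝ) ^ (-r) * ‖cesaroMean p (lam • T) n‖ ≤ C)
      ↔ ((∀ lam : ℂ, 1 < ‖lam‖ →
            ∃ S : X →L[ℂ] X,
              (T - lam • (1 : X →L[ℂ] X)) ∘L S = 1 ∧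
              S ∘L (T - lam • (1 : X →L[ℂ] X)) = 1) ∧
          ∃ C : ℝ, ∀ lam : ℂ, 1 < ‖lam‖ →
            ∀ S : X →L[ℂ] X,
              (T - lam • (1 : X →L[ℂ] X)) ∘L S = 1 →
              S ∘L (T - lam • (1 : X →L[ℂ] X)) = 1 →
              ((‖lam‖ - 1) ^ (r + 1) / ‖lam‖ ^ r) * ‖S‖ ≤ C) := by
  have equivalence := stmt16_general hp (by linarith [p.cast_nonneg (α := ℝ)]) T
  simpa only [IsCesaroBounded, cesaroMean_eq_smul_cesaroSum (one_le_two.trans hp),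
    ContinuousLinearMap.mul_def] using
    equivalence.trans isKreissBounded_iff_forall_inverse
end

section
/- Let r ≥ 0 be a real number and T ∈ B(X). Then sup over all integers n ≥ 1 and all μ ∈ ℂ with |μ| = 1 of n^{−r} ‖M_n(μT)‖ is finite if and only if sup over all n ∈ ℕ and all λ ∈ ℂ with |λ| > 1 of ((|λ|−1)^{r+1}/|λ|^r) · ‖Σ_{k=0}^n λ^{−k−1} T^k‖ is finite. -/
open Filter Topology

/-- The Cesàro mean of an operator S: M_n(S) = (1/(n+1)) Σ_{j=0}^n S^j. -/
noncomputable def cesaroMean1 {X : Type*} [NormedAddCommGroup X] [NormedSpace ℂ X]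
    (S : X →L[ℂ] X) (n : ℕ) : X →L[ℂ] X :=
  (((n : ℂ) + 1)⁻¹) • ∑ j ∈ Finset.range (n + 1), S ^ j

/-!
Nothing about operators is needed beyond the sequence `a k = T ^ k`. With `λ⁻¹ = x μ`, `0 < x < 1`
and `‖μ‖ = 1`, the first supremum measures the growth of the partial sums `S n` of
`b k = μ ^ k • a k`, and the second the size of the damped sums `∑ k ≤ n, x ^ k • b k`. Each is
controlled by the other through Abel summation. If `‖S n‖ = O((n + 1) ^ s)`, write `x = q ^ 2`: one
factor `q ^ k` absorbs the growth of `S k` at the price `(1 - q) ^ (-s)`, and the other is summed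
against `1 - x`. Conversely, undoing the damping costs a factor `x ^ (-n)`, which is bounded when
`1 - x` is of order `1 / n`.
-/

section RealEstimates

lemma rpow_le_add_one_rpow_mul_exp {s y : ℝ} (hs : 0 ≤ s) (hy : 0 ≤ y) :
    y ^ s ≤ (s + 1) ^ s * Real.exp y := by
  have h_base : y ≤ (s + 1) * Real.exp (y / (s + 1)) := by
    simpa [div_eq_inv_mul] using Real.le_inv_mul_exp y (c := (s + 1)⁻¹) (by positivity)
  have h_exponent : y / (s + 1) * s ≤ y := by
    rw [div_mul_eq_mul_div, div_le_iff₀ (by positivity)]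
    linarith
  calc y ^ s ≤ ((s + 1) * Real.exp (y / (s + 1))) ^ s := by gcongr
    _ = (s + 1) ^ s * Real.exp (y / (s + 1) * s) := by
        rw [Real.mul_rpow (by positivity) (by positivity), Real.exp_mul]
    _ ≤ (s + 1) ^ s * Real.exp y := by gcongr

lemma pow_mul_rpow_mul_one_sub_rpow_le {s q : ℝ} (hs : 0 ≤ s) (hq₀ : 0 ≤ q) (hq₁ : q ≤ 1)
    (n : ℕ) : q ^ n * (((n : ℝ) + 1) ^ s * (1 - q) ^ s) ≤ Real.exp 1 * (s + 1) ^ s := by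
  have hq : 0 ≤ 1 - q := sub_nonneg.2 hq₁
  rw [← Real.mul_rpow (by positivity) hq]
  set y := ((n : ℝ) + 1) * (1 - q) with hy
  have h_pow : q ^ n ≤ Real.exp (1 - y) := calc
    q ^ n ≤ Real.exp (q - 1) ^ n := by
      gcongr
      linarith [Real.add_one_le_exp (q - 1)]
    _ = Real.exp (n * (q - 1)) := (Real.exp_nat_mul _ _).symm
    _ ≤ Real.exp (1 - y) := Real.exp_le_exp.2 (by rw [hy]; linarith)
  calc q ^ n * y ^ s ≤ Real.exp (1 - y) * ((s + 1) ^ s * Real.exp y) := by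
        gcongr
        exact rpow_le_add_one_rpow_mul_exp hs (by positivity)
    _ = Real.exp (1 - y) * Real.exp y * (s + 1) ^ s := by ring
    _ = Real.exp 1 * (s + 1) ^ s := by rw [← Real.exp_add, sub_add_cancel]

lemma rpow_le_two_rpow_abs_mul_rpow {a b : ℝ} (ha : 0 < a) (hb : 0 < b) (hab : a ≤ 2 * b)
    (hba : b ≤ 2 * a) (r : ℝ) : a ^ r ≤ 2 ^ |r| * b ^ r := by
  rcases le_total 0 r with hr | hr
  · rw [abs_of_nonneg hr, ← Real.mul_rpow zero_le_two hb.le]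
    exact Real.rpow_le_rpow ha.le hab hr
  · calc a ^ r ≤ (b / 2) ^ r := Real.rpow_le_rpow_of_nonpos (by positivity) (by linarith) hr
      _ = 2 ^ |r| * b ^ r := by
        rw [abs_of_nonpos hr, Real.div_rpow hb.le zero_le_two, Real.rpow_neg zero_le_two]
        ring

end RealEstimates

section AbelSummation

open Finset

variable {E : Type*} [SeminormedAddCommGroup E]

lemma norm_sum_range_succ_smul_le {R : Type*} [SeminormedRing R] [Module R E] [IsBoundedSMul R E]
    (w : ℕ → R) (b : ℕ → E) (n : ℕ) :
    ‖∑ k ∈ range (n + 1), w k • b k‖ ≤ ‖w n‖ * ‖∑ k ∈ range (n + 1), b k‖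
      + ∑ k ∈ range n, ‖w (k + 1) - w k‖ * ‖∑ j ∈ range (k + 1), b j‖ := by
  rw [sum_range_by_parts, Nat.add_sub_cancel]
  exact (norm_sub_le _ _).trans
    (add_le_add (norm_smul_le _ _) (norm_sum_le_of_le _ fun k _ => norm_smul_le _ _))

variable [NormedSpace ℝ E]

lemma norm_sum_range_succ_smul_le_of_monotone {w : ℕ → ℝ} (hw : Monotone w) (hw₀ : 0 ≤ w 0)
    {b : ℕ → E} {D : ℝ} (hb : ∀ k, ‖∑ j ∈ range (k + 1), b j‖ ≤ D) (n : ℕ) :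
    ‖∑ k ∈ range (n + 1), w k • b k‖ ≤ 2 * w n * D := by
  have hD : 0 ≤ D := (norm_nonneg _).trans (hb 0)
  have h_step (k : ℕ) : ‖w (k + 1) - w k‖ = w (k + 1) - w k :=
    Real.norm_of_nonneg (sub_nonneg.2 (hw k.le_succ))
  calc ‖∑ k ∈ range (n + 1), w k • b k‖
      ≤ ‖w n‖ * D + ∑ k ∈ range n, ‖w (k + 1) - w k‖ * D := by
        refine (norm_sum_range_succ_smul_le w b n).trans ?_
        gcongr <;> exact hb _
    _ = (2 * w n - w 0) * D := by
        simp only [h_step]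
        rw [← sum_mul, sum_range_sub, Real.norm_of_nonneg (hw₀.trans (hw n.zero_le))]
        ring
    _ ≤ 2 * w n * D := by
        gcongr
        linarith

lemma pow_mul_norm_sum_range_succ_le {x : ℝ} (hx₀ : 0 < x) (hx₁ : x ≤ 1) {b : ℕ → E} {D : ℝ}
    (hb : ∀ k, ‖∑ j ∈ range (k + 1), x ^ j • b j‖ ≤ D) (n : ℕ) :
    x ^ n * ‖∑ k ∈ range (n + 1), b k‖ ≤ 2 * D := by
  have h_mono : Monotone fun k : ℕ => x⁻¹ ^ k := pow_right_mono₀ (one_le_inv_iff₀.2 ⟨hx₀, hx₁⟩)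
  have h_undamp (k : ℕ) : x⁻¹ ^ k • x ^ k • b k = b k := by
    rw [inv_pow, inv_smul_smul₀ (pow_ne_zero k hx₀.ne')]
  have h_sum : ‖∑ k ∈ range (n + 1), b k‖ ≤ 2 * x⁻¹ ^ n * D := by
    simpa only [h_undamp] using norm_sum_range_succ_smul_le_of_monotone h_mono (by simp) hb n
  calc x ^ n * ‖∑ k ∈ range (n + 1), b k‖ ≤ x ^ n * (2 * x⁻¹ ^ n * D) := by gcongr
    _ = x ^ n * x⁻¹ ^ n * (2 * D) := by ring
    _ = 2 * D := by rw [← mul_pow, mul_inv_cancel₀ hx₀.ne', one_pow, one_mul]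

lemma norm_sum_range_succ_sq_pow_smul_le {q : ℝ} (hq₀ : 0 ≤ q) (hq₁ : q ≤ 1) {b : ℕ → E} {D : ℝ}
    (hb : ∀ k, q ^ k * ‖∑ j ∈ range (k + 1), b j‖ ≤ D) (n : ℕ) :
    ‖∑ k ∈ range (n + 1), (q ^ 2) ^ k • b k‖ ≤ 3 * D := by
  have hD : 0 ≤ D := (by positivity : (0 : ℝ) ≤ _).trans (hb 0)
  have h_last : ‖(q ^ 2) ^ n‖ * ‖∑ j ∈ range (n + 1), b j‖ ≤ D := calc
    _ = q ^ n * (q ^ n * ‖∑ j ∈ range (n + 1), b j‖) := by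
      rw [Real.norm_of_nonneg (by positivity)]
      ring
    _ ≤ 1 * D := by
      gcongr
      exacts [pow_le_one₀ hq₀ hq₁, hb n]
    _ = D := one_mul D
  have h_step (k : ℕ) : ‖(q ^ 2) ^ (k + 1) - (q ^ 2) ^ k‖ * ‖∑ j ∈ range (k + 1), b j‖
      ≤ (q ^ k - q ^ (k + 1)) * (2 * D) := calc
    _ = q ^ k * (1 - q) * ((1 + q) * (q ^ k * ‖∑ j ∈ range (k + 1), b j‖)) := by
      have h_anti : (q ^ 2) ^ (k + 1) ≤ (q ^ 2) ^ k :=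
        pow_le_pow_of_le_one (sq_nonneg q) (pow_le_one₀ hq₀ hq₁) (Nat.le_add_right k 1)
      rw [norm_sub_rev, Real.norm_of_nonneg (sub_nonneg.2 h_anti)]
      ring
    _ ≤ q ^ k * (1 - q) * (2 * D) := by
      have : 0 ≤ 1 - q := sub_nonneg.2 hq₁
      gcongr
      exacts [by linarith, hb k]
    _ = (q ^ k - q ^ (k + 1)) * (2 * D) := by ring
  calc ‖∑ k ∈ range (n + 1), (q ^ 2) ^ k • b k‖
      ≤ D + ∑ k ∈ range n, (q ^ k - q ^ (k + 1)) * (2 * D) :=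
        (norm_sum_range_succ_smul_le _ b n).trans
          (add_le_add h_last (sum_le_sum fun k _ => h_step k))
    _ = D + (1 - q ^ n) * (2 * D) := by rw [← sum_mul, sum_range_sub', pow_zero]
    _ ≤ 3 * D := by nlinarith [pow_nonneg hq₀ n]

lemma one_sub_rpow_mul_norm_sum_pow_smul_le {s : ℝ} (hs : 0 ≤ s) {b : ℕ → E} {C : ℝ}
    (hb : ∀ n : ℕ, ‖∑ k ∈ range (n + 1), b k‖ ≤ C * ((n : ℝ) + 1) ^ s)
    {x : ℝ} (hx₀ : 0 ≤ x) (hx₁ : x < 1) (n : ℕ) :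
    (1 - x) ^ s * ‖∑ k ∈ range (n + 1), x ^ k • b k‖
      ≤ 2 ^ s * (3 * (C * (Real.exp 1 * (s + 1) ^ s))) := by
  obtain ⟨q, hq₀, hq₁, rfl⟩ : ∃ q : ℝ, 0 ≤ q ∧ q < 1 ∧ x = q ^ 2 :=
    ⟨√x, Real.sqrt_nonneg x, by rwa [Real.sqrt_lt' one_pos, one_pow],
      (Real.sq_sqrt hx₀).symm⟩
  have hC : 0 ≤ C := by simpa using (norm_nonneg _).trans (hb 0)
  have hq : 0 < 1 - q := sub_pos.2 hq₁
  set K := Real.exp 1 * (s + 1) ^ s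
  have h_damped (k : ℕ) :
      q ^ k * ‖∑ j ∈ range (k + 1), b j‖ ≤ C * K / (1 - q) ^ s := by
    rw [le_div_iff₀ (by positivity)]
    calc q ^ k * ‖∑ j ∈ range (k + 1), b j‖ * (1 - q) ^ s
        ≤ q ^ k * (C * ((k : ℝ) + 1) ^ s) * (1 - q) ^ s := by
          gcongr
          exact hb k
      _ = C * (q ^ k * (((k : ℝ) + 1) ^ s * (1 - q) ^ s)) := by ring
      _ ≤ C * K := by
          gcongr
          exact pow_mul_rpow_mul_one_sub_rpow_le hs hq₀ hq₁.le k
  have h_weight : (1 - q ^ 2) ^ s ≤ 2 ^ s * (1 - q) ^ s := by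
    rw [← Real.mul_rpow zero_le_two hq.le]
    exact Real.rpow_le_rpow (sub_nonneg.2 hx₁.le) (by nlinarith) hs
  calc (1 - q ^ 2) ^ s * ‖∑ k ∈ range (n + 1), (q ^ 2) ^ k • b k‖
      ≤ 2 ^ s * (1 - q) ^ s * (3 * (C * K / (1 - q) ^ s)) := by
        gcongr
        exact norm_sum_range_succ_sq_pow_smul_le hq₀ hq₁.le h_damped n
    _ = 2 ^ s * (3 * (C * K)) := by field_simp

lemma norm_sum_range_succ_le_mul_rpow {s : ℝ} (hs : 0 ≤ s) {b : ℕ → E} {C : ℝ}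
    (hb : ∀ n : ℕ, ∀ x ∈ Set.Ioo (0 : ℝ) 1,
      (1 - x) ^ s * ‖∑ k ∈ range (n + 1), x ^ k • b k‖ ≤ C) (n : ℕ) :
    ‖∑ k ∈ range (n + 1), b k‖ ≤ 2 * Real.exp 1 * 2 ^ s * C * ((n : ℝ) + 1) ^ s := by
  set x : ℝ := ((n : ℝ) + 1) / (n + 2) with hx
  have hx₀ : 0 < x := by positivity
  have hx₁ : x < 1 := (div_lt_one (by positivity)).2 (by linarith)
  have h_sub : 1 - x = ((n : ℝ) + 2)⁻¹ := by
    rw [hx]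
    field_simp
    ring
  have h_inv : x⁻¹ = 1 + ((n + 1 : ℕ) : ℝ)⁻¹ := by
    rw [hx]
    push_cast
    field_simp
    ring
  have h_undamp : x⁻¹ ^ n ≤ Real.exp 1 := calc
    x⁻¹ ^ n ≤ x⁻¹ ^ (n + 1) := pow_le_pow_right₀ (one_le_inv_iff₀.2 ⟨hx₀, hx₁.le⟩) n.le_succ
    _ ≤ Real.exp 1 := h_inv ▸ Real.one_add_inv_pow_le_exp
  have h_damped (k : ℕ) : ‖∑ j ∈ range (k + 1), x ^ j • b j‖ ≤ ((n : ℝ) + 2) ^ s * C := by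
    have h := hb k x ⟨hx₀, hx₁⟩
    rwa [h_sub, Real.inv_rpow (by positivity), inv_mul_le_iff₀ (by positivity)] at h
  have h_shift : ((n : ℝ) + 2) ^ s ≤ 2 ^ s * ((n : ℝ) + 1) ^ s := by
    rw [← Real.mul_rpow zero_le_two (by positivity)]
    gcongr
    linarith
  have hC : 0 ≤ C :=
    nonneg_of_mul_nonneg_right ((norm_nonneg _).trans (h_damped 0)) (by positivity)
  calc ‖∑ k ∈ range (n + 1), b k‖
      = x⁻¹ ^ n * (x ^ n * ‖∑ k ∈ range (n + 1), b k‖) := by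
        rw [← mul_assoc, ← mul_pow, inv_mul_cancel₀ hx₀.ne', one_pow, one_mul]
    _ ≤ Real.exp 1 * (2 * (((n : ℝ) + 2) ^ s * C)) :=
        mul_le_mul h_undamp (pow_mul_norm_sum_range_succ_le hx₀ hx₁.le h_damped n)
          (by positivity) (by positivity)
    _ ≤ Real.exp 1 * (2 * (2 ^ s * ((n : ℝ) + 1) ^ s * C)) := by gcongr
    _ = 2 * Real.exp 1 * 2 ^ s * C * ((n : ℝ) + 1) ^ s := by ring

theorem exists_norm_sum_le_mul_rpow_iff {ι : Type*} (b : ι → ℕ → E) {s : ℝ} (hs : 0 ≤ s) :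
    (∃ C : ℝ, ∀ i, ∀ n : ℕ, ‖∑ k ∈ range (n + 1), b i k‖ ≤ C * ((n : ℝ) + 1) ^ s) ↔
      ∃ C : ℝ, ∀ i, ∀ n : ℕ, ∀ x ∈ Set.Ioo (0 : ℝ) 1,
        (1 - x) ^ s * ‖∑ k ∈ range (n + 1), x ^ k • b i k‖ ≤ C :=
  ⟨fun ⟨_, hC⟩ => ⟨_, fun i n _ hx =>
      one_sub_rpow_mul_norm_sum_pow_smul_le hs (hC i) hx.1.le hx.2 n⟩,
    fun ⟨_, hC⟩ => ⟨_, fun i n => norm_sum_range_succ_le_mul_rpow hs (hC i) n⟩⟩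

end AbelSummation

section PowerSeries

open Finset

variable {E : Type*} [SeminormedAddCommGroup E] [NormedSpace ℂ E]

lemma rpow_neg_mul_norm_average_le_iff {r C : ℝ} {n : ℕ} (hn : 1 ≤ n) (v : E) :
    (n : ℝ) ^ (-r) * ‖((n : ℂ) + 1)⁻¹ • v‖ ≤ C ↔ ‖v‖ ≤ C * (n : ℝ) ^ r * ((n : ℝ) + 1) := by
  have hn₀ : (0 : ℝ) < n := by exact_mod_cast hn
  have h_norm : ‖(n : ℂ) + 1‖ = (n : ℝ) + 1 := mod_cast Complex.norm_natCast (n + 1)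
  rw [norm_smul, norm_inv, h_norm, Real.rpow_neg hn₀.le, inv_mul_le_iff₀ (by positivity),
    inv_mul_le_iff₀ (by positivity), mul_comm, mul_comm C]

lemma exists_rpow_neg_mul_norm_average_le_iff {ι : Type*} {S : ι → ℕ → E}
    (hS : ∃ M : ℝ, ∀ i, ‖S i 0‖ ≤ M) (r : ℝ) :
    (∃ C : ℝ, ∀ n : ℕ, 1 ≤ n → ∀ i, (n : ℝ) ^ (-r) * ‖((n : ℂ) + 1)⁻¹ • S i n‖ ≤ C) ↔
      ∃ C : ℝ, ∀ i, ∀ n : ℕ, ‖S i n‖ ≤ C * ((n : ℝ) + 1) ^ (r + 1) := by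
  constructor
  · rintro ⟨C, hC⟩
    obtain ⟨M, hM⟩ := hS
    refine ⟨max M (|C| * 2 ^ |r|), fun i n => ?_⟩
    rcases n.eq_zero_or_pos with rfl | hn
    · simpa using Or.inl (hM i)
    have hn₁ : (1 : ℝ) ≤ n := by exact_mod_cast hn
    calc ‖S i n‖ ≤ C * (n : ℝ) ^ r * ((n : ℝ) + 1) :=
          (rpow_neg_mul_norm_average_le_iff hn _).1 (hC n hn i)
      _ ≤ |C| * (2 ^ |r| * ((n : ℝ) + 1) ^ r) * ((n : ℝ) + 1) := by
          gcongr
          · exact le_abs_self C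
          · exact rpow_le_two_rpow_abs_mul_rpow (by positivity) (by positivity) (by linarith)
              (by linarith) r
      _ = |C| * 2 ^ |r| * ((n : ℝ) + 1) ^ (r + 1) := by
          rw [Real.rpow_add_one (by positivity)]
          ring
      _ ≤ max M (|C| * 2 ^ |r|) * ((n : ℝ) + 1) ^ (r + 1) := by
          gcongr
          exact le_max_right _ _
  · rintro ⟨C, hC⟩
    refine ⟨|C| * 2 ^ |r|, fun n hn i => (rpow_neg_mul_norm_average_le_iff hn _).2 ?_⟩
    have hn₁ : (1 : ℝ) ≤ n := by exact_mod_cast hn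
    calc ‖S i n‖ ≤ C * (((n : ℝ) + 1) ^ r * ((n : ℝ) + 1)) := by
          simpa only [Real.rpow_add_one (by positivity : (n : ℝ) + 1 ≠ 0)] using hC i n
      _ ≤ |C| * (2 ^ |r| * (n : ℝ) ^ r * ((n : ℝ) + 1)) := by
          gcongr
          · exact le_abs_self C
          · exact rpow_le_two_rpow_abs_mul_rpow (by positivity) (by positivity) (by linarith)
              (by linarith) r
      _ = |C| * 2 ^ |r| * (n : ℝ) ^ r * ((n : ℝ) + 1) := by ring

lemma rpow_div_rpow_mul_norm_sum_zpow_smul (a : ℕ → E) (r : ℝ) {μ : ℂ} (hμ : ‖μ‖ = 1) {x : ℝ}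
    (hx : x ∈ Set.Ioo 0 1) (n : ℕ) :
    (‖(x * μ)⁻¹‖ - 1) ^ (r + 1) / ‖(x * μ)⁻¹‖ ^ r *
        ‖∑ k ∈ range (n + 1), (x * μ)⁻¹ ^ (-(k : ℤ) - 1) • a k‖ =
      (1 - x) ^ (r + 1) * ‖∑ k ∈ range (n + 1), x ^ k • μ ^ k • a k‖ := by
  obtain ⟨hx₀, hx₁⟩ := hx
  have h_norm : ‖x * μ‖ = x := by rw [norm_mul, hμ, mul_one, Complex.norm_of_nonneg hx₀.le]
  have h_sum : ∑ k ∈ range (n + 1), (x * μ)⁻¹ ^ (-(k : ℤ) - 1) • a k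
      = (x * μ) • ∑ k ∈ range (n + 1), x ^ k • μ ^ k • a k := by
    rw [smul_sum]
    refine sum_congr rfl fun k _ => ?_
    have h_exponent : (x * μ)⁻¹ ^ (-(k : ℤ) - 1) = (x * μ) * ((x ^ k : ℝ) * μ ^ k) := by
      rw [inv_zpow', neg_sub, sub_neg_eq_add, add_comm, Complex.ofReal_pow, ← mul_pow, ← pow_succ']
      exact zpow_natCast _ (k + 1)
    rw [h_exponent, mul_smul, mul_smul ((x ^ k : ℝ) : ℂ), Complex.coe_smul]
  have h_sub : x⁻¹ - 1 = (1 - x) / x := by field_simp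
  rw [h_sum, norm_smul, norm_inv, h_norm, h_sub, Real.div_rpow (sub_nonneg.2 hx₁.le) hx₀.le,
    Real.rpow_add_one hx₀.ne' r, Real.inv_rpow hx₀.le]
  field_simp

lemma forall_one_lt_norm_iff {p : ℂ → Prop} :
    (∀ z : ℂ, 1 < ‖z‖ → p z) ↔
      ∀ μ : ℂ, ‖μ‖ = 1 → ∀ x ∈ Set.Ioo (0 : ℝ) 1, p (x * μ)⁻¹ := by
  constructor
  · intro h μ hμ x hx
    refine h _ ?_
    rw [norm_inv, norm_mul, hμ, mul_one, Complex.norm_of_nonneg hx.1.le]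
    exact (one_lt_inv₀ hx.1).2 hx.2
  · intro h z hz
    have hz₀ : (‖z‖ : ℂ) ≠ 0 := by exact_mod_cast (one_pos.trans hz).ne'
    have hμ : ‖(‖z‖ : ℂ) * z⁻¹‖ = 1 := by
      rw [norm_mul, norm_inv, Complex.norm_real, norm_norm, mul_inv_cancel₀ (by exact_mod_cast hz₀)]
    have hx : ‖z‖⁻¹ ∈ Set.Ioo (0 : ℝ) 1 := ⟨inv_pos.2 (one_pos.trans hz), inv_lt_one_of_one_lt₀ hz⟩
    simpa [hz₀] using h _ hμ _ hx

theorem stmt17_general (a : ℕ → E) {r : ℝ} (hr : -1 ≤ r) :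
    (∃ C : ℝ, ∀ n : ℕ, 1 ≤ n → ∀ μ : ℂ, ‖μ‖ = 1 →
        (n : ℝ) ^ (-r) * ‖((n : ℂ) + 1)⁻¹ • ∑ k ∈ range (n + 1), μ ^ k • a k‖ ≤ C) ↔
      ∃ C : ℝ, ∀ (n : ℕ) (lam : ℂ), 1 < ‖lam‖ →
        (‖lam‖ - 1) ^ (r + 1) / ‖lam‖ ^ r *
          ‖∑ k ∈ range (n + 1), lam ^ (-(k : ℤ) - 1) • a k‖ ≤ C := by
  let b (μ : {μ : ℂ // ‖μ‖ = 1}) (k : ℕ) : E := (μ : ℂ) ^ k • a k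
  have h_average := exists_rpow_neg_mul_norm_average_le_iff
    (S := fun μ n => ∑ k ∈ range (n + 1), b μ k) ⟨‖a 0‖, fun μ => by simp [b]⟩ r
  have h_abel := exists_norm_sum_le_mul_rpow_iff b (neg_le_iff_add_nonneg.1 hr)
  calc _ ↔ ∃ C : ℝ, ∀ μ, ∀ n : ℕ, ‖∑ k ∈ range (n + 1), b μ k‖ ≤ C * ((n : ℝ) + 1) ^ (r + 1) := by
        simpa only [Subtype.forall] using h_average
    _ ↔ ∃ C : ℝ, ∀ μ, ∀ n : ℕ, ∀ x ∈ Set.Ioo (0 : ℝ) 1,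
          (1 - x) ^ (r + 1) * ‖∑ k ∈ range (n + 1), x ^ k • b μ k‖ ≤ C := h_abel
    _ ↔ _ := by
        simp only [forall_one_lt_norm_iff, Subtype.forall, b]
        refine exists_congr fun C => ⟨fun h n μ hμ x hx => ?_, fun h μ hμ n x hx => ?_⟩
        · exact (rpow_div_rpow_mul_norm_sum_zpow_smul a r hμ hx n).trans_le (h μ hμ n x hx)
        · exact (rpow_div_rpow_mul_norm_sum_zpow_smul a r hμ hx n).ge.trans (h n μ hμ x hx)

end PowerSeries

/-- Kreiss-type equivalence for p = 1: sup_{n≥1,|μ|=1} n^{−r} ‖M_n(μT)‖ < ∞ iff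
sup_{n∈ℕ,|λ|>1} ((|λ|−1)^{r+1}/|λ|^r) ‖Σ_{k=0}^n λ^{−k−1} T^k‖ < ∞. -/
theorem stmt17 {X : Type*} [NormedAddCommGroup X] [NormedSpace ℂ X] [CompleteSpace X]
    (T : X →L[ℂ] X)
    (r : ℝ) (hr : 0 ≤ r) :
    (∃ C : ℝ, ∀ n : ℕ, 1 ≤ n → ∀ μ : ℂ, ‖μ‖ = 1 →
        (n : ℝ) ^ (-r) * ‖cesaroMean1 (μ • T) n‖ ≤ C)
      ↔ (∃ C : ℝ, ∀ (n : ℕ) (lam : ℂ), 1 < ‖lam‖ →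
          ((‖lam‖ - 1) ^ (r + 1) / ‖lam‖ ^ r) *
            ‖∑ k ∈ Finset.range (n + 1), (lam ^ (-(k : ℤ) - 1)) • T ^ k‖ ≤ C) := by
  simpa only [cesaroMean1, smul_pow] using stmt17_general (fun k => T ^ k) (by linarith)
end
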